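/- arXiv:2309.10368 — 2 statements merged into one kernel-verified Lean document; each statement's English description precedes it below -/
import Mathlib

section
/- Fix an active set A of points, starting sizes |C_i| for each of the k clusters (i ∈ [k]), and an order π : A → [|A|] in which the points of A first move. Let the random point set X consist of n points obtained by independent Gaussian perturbations (mean 0, standard deviation σ ≤ 1) of fixed points in [0,1]^d, conditioned on X ⊆ [−D/2, D/2]^d with D = √(2n ln(nkd)). Let Δ be the minimum, over all configurations of X \ A, of the total potential improvement of any sequence of Hartigan–Wong iterations in which exactly the points of A move, with the given initial cluster sizes and first-move order π. Then for every ε ≤ 1, the probability that Δ ≤ ε is at most (2D/ε)^{kd} · (c · k^{|A|} · d^{3/4} · D · n · |A| · √ε / σ)^{|A|} for some absolute constant c > 0. -/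
open MeasureTheory ProbabilityTheory

noncomputable section

/-- The identification of `Fin d → ℝ` with `EuclideanSpace ℝ (Fin d)`. -/
def toEuc {d : ℕ} (x : Fin d → ℝ) : EuclideanSpace ℝ (Fin d) :=
  (WithLp.equiv 2 (Fin d → ℝ)).symm x

/-- The indices of the points assigned to cluster `i` by the labeling `cl`. -/
def clusterIdx {n k : ℕ} (cl : Fin n → Fin k) (i : Fin k) : Finset (Fin n) :=
  Finset.univ.filter fun j => cl j = i

/-- The center of mass of cluster `i` of the point set `X` under the labeling `cl`. -/
def clusterCtr {n k d : ℕ} (X : Fin n → EuclideanSpace ℝ (Fin d)) (cl : Fin n → Fin k)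
    (i : Fin k) : EuclideanSpace ℝ (Fin d) :=
  ((clusterIdx cl i).card : ℝ)⁻¹ • ∑ j ∈ clusterIdx cl i, X j

/-- The `k`-means potential `Φ` of the point set `X` partitioned according to `cl`. -/
def kmeansPot {n k d : ℕ} (X : Fin n → EuclideanSpace ℝ (Fin d)) (cl : Fin n → Fin k) : ℝ :=
  ∑ i : Fin k, ∑ j ∈ clusterIdx cl i, ‖X j - clusterCtr X cl i‖ ^ 2

/-- `cl'` is obtained from `cl` by reassigning a single point to a different cluster. -/
def SingleMove {n k : ℕ} (cl cl' : Fin n → Fin k) : Prop :=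
  ∃ j : Fin n, cl' j ≠ cl j ∧ ∀ j' : Fin n, j' ≠ j → cl' j' = cl j'

/-- The distribution of `n` points, the `i`-th obtained by perturbing `Y i ∈ [0,1]^d` by an
independent `d`-dimensional Gaussian of mean `0` and standard deviation `σ`. -/
def perturbedPoints (n d : ℕ) (Y : Fin n → Fin d → ℝ) (σ : ℝ) :
    Measure (Fin n → Fin d → ℝ) :=
  Measure.pi fun i => Measure.pi fun j => gaussianReal (Y i j) ((σ ^ 2).toNNReal)

/-- `D = √(2n·ln(nkd))`. -/
def cubeD (n k d : ℕ) : ℝ := Real.sqrt (2 * n * Real.log ((n : ℝ) * k * d))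

end

/-!
The gain of a Hartigan–Wong move of `x` is a nondegenerate quadratic polynomial in `x`: up to a
constant it is `ρ‖x - z‖²` with `ρ ≥ 1/n`. Every iteration of the sequence improves the potential,
so if the total improvement is at most `ε`, then so is the gain of the first move of each active
point `b`, which confines `b` to a thin spherical shell around a center `z` determined by the
cluster centers at that time. Those depend on the inactive points only through the starting
centers. A union bound over a grid of spacing `2ε` for the starting centers and over the labels of
the active points at each first move therefore leaves, for each guess, an event for `b` that
involves only the points moved before `b`. Processing the active points in the order of their first
moves, each contributes a factor equal to the probability of a shell, bounded by
`(density) · 2√(width)` along a single coordinate.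
-/

namespace HartiganWong

section Gain

variable {E : Type*} [NormedAddCommGroup E]

/-- The gain `Δ_x` of moving the point `x` from a cluster of size `p` and center `c` to a cluster
of size `q` and center `c'`. For `p = 1` the quotient `p / (p - 1)` is `0`, which is the right
value because then `x = c`. -/
noncomputable def moveGain (p q : ℝ) (c c' x : E) : ℝ :=
  p / (p - 1) * ‖x - c‖ ^ 2 - q / (q + 1) * ‖x - c'‖ ^ 2

theorem moveGain_one_nonpos {q : ℝ} (hq : 0 ≤ q) (c c' x : E) : moveGain 1 q c c' x ≤ 0 := by
  have : 0 ≤ q / (q + 1) * ‖x - c'‖ ^ 2 := by positivity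
  simpa [moveGain] using this

theorem inv_le_div_sub_div {p q r : ℝ} (hp : 1 < p) (hq : 0 ≤ q) (hr : q + 1 ≤ r) :
    r⁻¹ ≤ p / (p - 1) - q / (q + 1) := by
  have hp' : 0 < p - 1 := sub_pos.2 hp
  have hq' : 0 < q + 1 := by positivity
  calc r⁻¹ ≤ (q + 1)⁻¹ := inv_anti₀ hq' hr
    _ ≤ (p - 1)⁻¹ + (q + 1)⁻¹ := le_add_of_nonneg_left (inv_pos.2 hp').le
    _ = p / (p - 1) - q / (q + 1) := by field_simp; ring

theorem abs_norm_sq_sub_norm_sq_le {R δ : ℝ} {u w : E} (hu : ‖u‖ ≤ R) (huw : ‖u - w‖ ≤ δ) :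
    |‖u‖ ^ 2 - ‖w‖ ^ 2| ≤ δ * (2 * R + δ) := by
  have hδ : 0 ≤ δ := (norm_nonneg _).trans huw
  have hw : ‖w‖ ≤ R + δ := by
    linarith [norm_sub_norm_le w u, norm_sub_rev w u]
  rw [sq_sub_sq, mul_comm, abs_mul, abs_of_nonneg (add_nonneg (norm_nonneg u) (norm_nonneg w))]
  exact mul_le_mul ((abs_norm_sub_norm_le u w).trans huw) (by linarith) (by positivity) hδ

theorem abs_moveGain_sub_moveGain_le {p q R δ : ℝ} {c c' e e' x : E} (hp : 2 ≤ p) (hq : 0 ≤ q)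
    (hc : ‖x - c‖ ≤ R) (hc' : ‖x - c'‖ ≤ R) (he : ‖c - e‖ ≤ δ) (he' : ‖c' - e'‖ ≤ δ) :
    |moveGain p q c c' x - moveGain p q e e' x| ≤ 3 * (δ * (2 * R + δ)) := by
  have herr : |‖x - c‖ ^ 2 - ‖x - e‖ ^ 2| ≤ δ * (2 * R + δ) :=
    abs_norm_sq_sub_norm_sq_le hc (by rwa [sub_sub_sub_cancel_left, norm_sub_rev])
  have herr' : |‖x - c'‖ ^ 2 - ‖x - e'‖ ^ 2| ≤ δ * (2 * R + δ) :=
    abs_norm_sq_sub_norm_sq_le hc' (by rwa [sub_sub_sub_cancel_left, norm_sub_rev])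
  have hα : |p / (p - 1)| ≤ 2 := by
    rw [abs_of_nonneg (div_nonneg (by linarith) (by linarith)), div_le_iff₀ (by linarith)]
    linarith
  have hβ : |q / (q + 1)| ≤ 1 := by
    rw [abs_of_nonneg (by positivity), div_le_one (by linarith)]
    linarith
  calc |moveGain p q c c' x - moveGain p q e e' x|
      = |p / (p - 1) * (‖x - c‖ ^ 2 - ‖x - e‖ ^ 2)
          - q / (q + 1) * (‖x - c'‖ ^ 2 - ‖x - e'‖ ^ 2)| := by rw [moveGain, moveGain]; ring_nf
    _ ≤ |p / (p - 1)| * |‖x - c‖ ^ 2 - ‖x - e‖ ^ 2|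
          + |q / (q + 1)| * |‖x - c'‖ ^ 2 - ‖x - e'‖ ^ 2| := by
        rw [← abs_mul, ← abs_mul]; exact abs_sub _ _
    _ ≤ 2 * (δ * (2 * R + δ)) + 1 * (δ * (2 * R + δ)) := by gcongr
    _ = 3 * (δ * (2 * R + δ)) := by ring

end Gain

section Mean

variable {ι E : Type*} [NormedAddCommGroup E] [NormedSpace ℝ E]

/-- The center of mass `cm` of the points `x j`, `j ∈ C`; it is `0` for `C = ∅`. -/
noncomputable def mean (C : Finset ι) (x : ι → E) : E :=
  (C.card : ℝ)⁻¹ • ∑ j ∈ C, x j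

/-- The contribution of a cluster `C` to the `k`-means potential. -/
noncomputable def inertia (C : Finset ι) (x : ι → E) : ℝ :=
  ∑ j ∈ C, ‖x j - mean C x‖ ^ 2

theorem card_smul_mean (C : Finset ι) (x : ι → E) : (C.card : ℝ) • mean C x = ∑ j ∈ C, x j := by
  obtain rfl | hC := C.eq_empty_or_nonempty
  · simp
  · exact smul_inv_smul₀ (Nat.cast_ne_zero.2 hC.card_pos.ne') _

theorem norm_mean_le {C : Finset ι} {x : ι → E} {R : ℝ} (hR : 0 ≤ R) (hx : ∀ j ∈ C, ‖x j‖ ≤ R) :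
    ‖mean C x‖ ≤ R := by
  obtain rfl | hC := C.eq_empty_or_nonempty
  · simpa [mean] using hR
  · have hcard : (0 : ℝ) < C.card := Nat.cast_pos.2 hC.card_pos
    rw [mean, norm_smul, norm_inv, Real.norm_natCast, inv_mul_le_iff₀ hcard, ← nsmul_eq_mul]
    exact norm_sum_le_of_le C hx |>.trans_eq (by simp)

end Mean

section Inertia

variable {ι E : Type*} [NormedAddCommGroup E] [InnerProductSpace ℝ E]

theorem inertia_eq (C : Finset ι) (x : ι → E) :
    inertia C x = ∑ j ∈ C, ‖x j‖ ^ 2 - C.card * ‖mean C x‖ ^ 2 := by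
  have hinner : ∑ j ∈ C, inner ℝ (x j) (mean C x) = C.card * ‖mean C x‖ ^ 2 := by
    rw [← sum_inner, ← card_smul_mean, real_inner_smul_left, real_inner_self_eq_norm_sq]
  simp only [inertia, norm_sub_sq_real, Finset.sum_add_distrib, Finset.sum_sub_distrib,
    ← Finset.mul_sum, hinner, Finset.sum_const, nsmul_eq_mul]
  ring

theorem inertia_insert_sub [DecidableEq ι] {C : Finset ι} {b : ι} (hb : b ∉ C) (x : ι → E) :
    inertia (insert b C) x - inertia C x
      = C.card / (C.card + 1 : ℝ) * ‖x b - mean C x‖ ^ 2 := by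
  have hpos : (0 : ℝ) < C.card + 1 := by positivity
  have hmean : mean (insert b C) x = (C.card + 1 : ℝ)⁻¹ • (x b + (C.card : ℝ) • mean C x) := by
    rw [mean, Finset.sum_insert hb, card_smul_mean, Finset.card_insert_of_notMem hb,
      Nat.cast_succ]
  rw [inertia_eq, inertia_eq, hmean, Finset.sum_insert hb, Finset.card_insert_of_notMem hb,
    norm_smul, mul_pow, norm_add_sq_real, norm_sub_sq_real, norm_smul, real_inner_smul_right,
    norm_inv, Real.norm_natCast, Real.norm_of_nonneg hpos.le]
  push_cast
  field_simp
  ring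

theorem inertia_sub_erase [DecidableEq ι] {C : Finset ι} {b : ι} (hb : b ∈ C) (x : ι → E) :
    inertia C x - inertia (C.erase b) x
      = C.card / (C.card - 1 : ℝ) * ‖x b - mean C x‖ ^ 2 := by
  obtain ⟨s, hbs, rfl⟩ : ∃ s, b ∉ s ∧ insert b s = C :=
    ⟨C.erase b, Finset.notMem_erase b C, Finset.insert_erase hb⟩
  have hpos : (0 : ℝ) < s.card + 1 := by positivity
  have hdiff : x b - mean (insert b s) x
      = (s.card / (s.card + 1) : ℝ) • (x b - mean s x) := by
    refine smul_right_injective E hpos.ne' ?_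
    have hsum := card_smul_mean (insert b s) x
    rw [Finset.sum_insert hbs, ← card_smul_mean, Finset.card_insert_of_notMem hbs,
      Nat.cast_succ] at hsum
    simp only [smul_sub, hsum, smul_smul, mul_div_cancel₀ _ hpos.ne']
    module
  rw [Finset.erase_insert hbs, inertia_insert_sub hbs, hdiff, norm_smul, mul_pow,
    Real.norm_of_nonneg (by positivity), Finset.card_insert_of_notMem hbs]
  push_cast
  obtain hs | hs := eq_or_ne (s.card : ℝ) 0
  · simp [hs]
  · rw [add_sub_cancel_right]
    field_simp

theorem exists_weighted_norm_sq_sub_eq {α β : ℝ} (h : α - β ≠ 0) (c c' : E) :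
    ∃ (z : E) (γ : ℝ), ∀ x : E,
      α * ‖x - c‖ ^ 2 - β * ‖x - c'‖ ^ 2 = (α - β) * ‖x - z‖ ^ 2 + γ := by
  refine ⟨(α - β)⁻¹ • (α • c - β • c'),
    α * ‖c‖ ^ 2 - β * ‖c'‖ ^ 2 - (α - β) * ‖(α - β)⁻¹ • (α • c - β • c')‖ ^ 2, fun x => ?_⟩
  rw [norm_sub_sq_real x, norm_sub_sq_real x, norm_sub_sq_real x, real_inner_smul_right,
    inner_sub_right, real_inner_smul_right, real_inner_smul_right]
  field_simp
  ring

end Inertia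

section Potential

variable {n k d : ℕ} {X : Fin n → EuclideanSpace ℝ (Fin d)} {cl : Fin n → Fin k}

theorem kmeansPot_eq_sum_inertia (X : Fin n → EuclideanSpace ℝ (Fin d)) (cl : Fin n → Fin k) :
    kmeansPot X cl = ∑ i, inertia (clusterIdx cl i) X := rfl

theorem clusterIdx_update_self (cl : Fin n → Fin k) (b : Fin n) (j : Fin k) :
    clusterIdx (Function.update cl b j) j = insert b (clusterIdx cl j) := by
  grind [clusterIdx]

theorem clusterIdx_update_source {b : Fin n} {j : Fin k} (hj : j ≠ cl b) :
    clusterIdx (Function.update cl b j) (cl b) = (clusterIdx cl (cl b)).erase b := by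
  grind [clusterIdx]

theorem clusterIdx_update_of_ne {b : Fin n} {i j : Fin k} (hi : i ≠ cl b) (hij : i ≠ j) :
    clusterIdx (Function.update cl b j) i = clusterIdx cl i := by
  grind [clusterIdx]

theorem kmeansPot_sub_kmeansPot_update (X : Fin n → EuclideanSpace ℝ (Fin d)) {b : Fin n}
    {j : Fin k} (hj : j ≠ cl b) :
    kmeansPot X cl - kmeansPot X (Function.update cl b j)
      = moveGain (clusterIdx cl (cl b)).card (clusterIdx cl j).card
          (clusterCtr X cl (cl b)) (clusterCtr X cl j) (X b) := by
  have hmem : b ∈ clusterIdx cl (cl b) := by simp [clusterIdx]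
  have hnotMem : b ∉ clusterIdx cl j := by simp [clusterIdx, hj.symm]
  rw [kmeansPot_eq_sum_inertia, kmeansPot_eq_sum_inertia, ← Finset.sum_sub_distrib,
    Fintype.sum_eq_add (cl b) j hj.symm fun i hi => by
      rw [clusterIdx_update_of_ne hi.1 hi.2, sub_self],
    clusterIdx_update_source hj, clusterIdx_update_self, inertia_sub_erase hmem,
    ← neg_sub (inertia _ X), inertia_insert_sub hnotMem, ← sub_eq_add_neg]
  rfl

theorem two_le_card_of_kmeansPot_update_lt {b : Fin n} {j : Fin k} (hj : j ≠ cl b)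
    (hlt : kmeansPot X (Function.update cl b j) < kmeansPot X cl) :
    2 ≤ (clusterIdx cl (cl b)).card := by
  have hpos : 0 < (clusterIdx cl (cl b)).card := Finset.card_pos.2 ⟨b, by simp [clusterIdx]⟩
  by_contra hcard
  have hone : (clusterIdx cl (cl b)).card = 1 := by omega
  have hgain := kmeansPot_sub_kmeansPot_update X hj
  rw [hone, Nat.cast_one] at hgain
  have := moveGain_one_nonpos (clusterIdx cl j).card.cast_nonneg
    (clusterCtr X cl (cl b)) (clusterCtr X cl j) (X b)
  linarith

theorem card_clusterIdx_le (cl : Fin n → Fin k) (i : Fin k) : (clusterIdx cl i).card ≤ n :=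
  (Finset.card_le_univ _).trans_eq (Fintype.card_fin n)

theorem card_clusterIdx_add_one_le {b : Fin n} {j : Fin k} (hj : j ≠ cl b) :
    (clusterIdx cl j).card + 1 ≤ n := by
  have hnotMem : b ∉ clusterIdx cl j := by simp [clusterIdx, hj.symm]
  rw [← Finset.card_insert_of_notMem hnotMem, ← clusterIdx_update_self]
  exact card_clusterIdx_le _ _

end Potential

section TrackedSum

variable {ι α κ V : Type*} [DecidableEq κ] [AddCommGroup V]

/-- The sum of `v` over the cluster `i` of a labeling, expressed through the sum `base i` over the
cluster `i` of an initial labeling, when only the points of `s` have been relabeled from `start`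
to `cur`. -/
def trackedSum (s : Finset α) (start cur : α → κ) (base : κ → V) (v : α → V) (i : κ) : V :=
  base i + (∑ a ∈ s with cur a = i, v a) - ∑ a ∈ s with start a = i, v a

theorem sum_cluster_eq_trackedSum [Fintype ι] (e : α ↪ ι) {s : Finset α} {start cur : ι → κ}
    (h : ∀ j ∉ s.map e, cur j = start j) (v : ι → V) (i : κ) :
    ∑ j with cur j = i, v j
      = trackedSum s (start ∘ e) (cur ∘ e) (fun i => ∑ j with start j = i, v j) (v ∘ e) i := by
  have hdiff : ∑ j, ((if cur j = i then v j else 0) - if start j = i then v j else 0)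
      = ∑ a ∈ s, ((if cur (e a) = i then v (e a) else 0)
          - if start (e a) = i then v (e a) else 0) := by
    rw [← Finset.sum_map s e fun j =>
      (if cur j = i then v j else 0) - if start j = i then v j else 0]
    refine (Finset.sum_subset (Finset.subset_univ _) fun j _ hj => ?_).symm
    rw [h j hj, sub_self]
  simp only [Finset.sum_sub_distrib, ← Finset.sum_filter] at hdiff
  rw [trackedSum, add_sub_assoc]
  exact eq_add_of_sub_eq' hdiff

theorem trackedSum_congr {s : Finset α} {start cur cur' : α → κ} {v w : α → V} {base : κ → V}
    (hcur : ∀ a ∈ s, cur a = cur' a) (hv : ∀ a ∈ s, v a = w a) (i : κ) :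
    trackedSum s start cur base v i = trackedSum s start cur' base w i := by
  have hfilter : s.filter (cur · = i) = s.filter (cur' · = i) :=
    Finset.filter_congr fun a ha => by rw [hcur a ha]
  simp only [trackedSum, hfilter, Finset.sum_congr rfl fun a ha => hv a (Finset.mem_filter.1 ha).1]

theorem trackedSum_sub_trackedSum (s : Finset α) (start cur : α → κ) (base base' : κ → V)
    (v : α → V) (i : κ) :
    trackedSum s start cur base v i - trackedSum s start cur base' v i = base i - base' i := by
  simp only [trackedSum]
  abel

end TrackedSum

section GuessedGain

variable {α κ E : Type*} [Fintype α] [DecidableEq κ] [NormedAddCommGroup E] [NormedSpace ℝ E]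

/-- The points that move for the first time before `b` does. -/
def earlier (π : α → ℕ) (b : α) : Finset α := {a | π a < π b}

/-- The size of cluster `i` at the first move of `b`, computed from the starting sizes `sz`, the
starting labels `start` and the labels `cur` at that time. -/
def trackedSize (π : α → ℕ) (sz : κ → ℕ) (start cur : α → κ) (b : α) (i : κ) : ℝ :=
  trackedSum (earlier π b) start cur (fun i => (sz i : ℝ)) (fun _ => 1) i

/-- The center of cluster `i` at the first move of `b`, computed as if the starting centers
were `g`. -/
noncomputable def trackedCtr (π : α → ℕ) (sz : κ → ℕ) (start cur : α → κ) (g : κ → E) (b : α)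
    (x : α → E) (i : κ) : E :=
  (trackedSize π sz start cur b i)⁻¹
    • trackedSum (earlier π b) start cur (fun i => (sz i : ℝ) • g i) x i

/-- The difference of the weights of the two squared distances in the gain of the first move
of `b`. -/
noncomputable def gainCurvature (π : α → ℕ) (sz : κ → ℕ) (start cur : α → κ) (b : α) : ℝ :=
  trackedSize π sz start cur b (start b) / (trackedSize π sz start cur b (start b) - 1)
    - trackedSize π sz start cur b (cur b) / (trackedSize π sz start cur b (cur b) + 1)

/-- The gain of the first move of `b`, from cluster `start b` to cluster `cur b`, computed as if the
starting centers were `g`. It depends only on `x b` and the points that moved before `b`. -/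
noncomputable def guessedGain (π : α → ℕ) (sz : κ → ℕ) (start cur : α → κ) (g : κ → E) (b : α)
    (x : α → E) : ℝ :=
  moveGain (trackedSize π sz start cur b (start b)) (trackedSize π sz start cur b (cur b))
    (trackedCtr π sz start cur g b x (start b)) (trackedCtr π sz start cur g b x (cur b)) (x b)

theorem trackedCtr_congr {π : α → ℕ} {b : α} {x y : α → E} (h : ∀ a, π a < π b → x a = y a)
    (sz : κ → ℕ) (start cur : α → κ) (g : κ → E) (i : κ) :
    trackedCtr π sz start cur g b x i = trackedCtr π sz start cur g b y i := by
  rw [trackedCtr, trackedCtr, trackedSum_congr (fun _ _ => rfl) fun a ha =>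
    h a (by simpa [earlier] using ha)]

theorem guessedGain_congr {π : α → ℕ} {b : α} {x y : α → E} (h : ∀ a, π a ≤ π b → x a = y a)
    (sz : κ → ℕ) (start cur : α → κ) (g : κ → E) :
    guessedGain π sz start cur g b x = guessedGain π sz start cur g b y := by
  have hlt : ∀ a, π a < π b → x a = y a := fun a ha => h a ha.le
  rw [guessedGain, guessedGain, trackedCtr_congr hlt, trackedCtr_congr hlt, h b le_rfl]

theorem guessedGain_update [DecidableEq α] (π : α → ℕ) (sz : κ → ℕ) (start cur : α → κ)
    (g : κ → E) (b : α) (x : α → E) (y : E) :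
    guessedGain π sz start cur g b (Function.update x b y)
      = moveGain (trackedSize π sz start cur b (start b)) (trackedSize π sz start cur b (cur b))
          (trackedCtr π sz start cur g b x (start b))
          (trackedCtr π sz start cur g b x (cur b)) y := by
  have hlt : ∀ a, π a < π b → Function.update x b y a = x a := fun a ha =>
    Function.update_of_ne (by rintro rfl; exact ha.false) _ _
  rw [guessedGain, trackedCtr_congr hlt, trackedCtr_congr hlt, Function.update_self]

theorem continuous_guessedGain (π : α → ℕ) (sz : κ → ℕ) (start cur : α → κ) (g : κ → E) (b : α) :
    Continuous (guessedGain π sz start cur g b) := by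
  unfold guessedGain moveGain trackedCtr trackedSum
  fun_prop

/-- The positions of the active points for which the guessed gain of the first move of `b` lies
in `[lo, hi]`, provided its curvature is at least `r`. -/
def guessEvent (π : α → ℕ) (sz : κ → ℕ) (start cur : α → κ) (g : κ → E) (r lo hi : ℝ) (b : α) :
    Set (α → E) :=
  {x | r ≤ gainCurvature π sz start cur b ∧ guessedGain π sz start cur g b x ∈ Set.Icc lo hi}

theorem isClosed_guessEvent (π : α → ℕ) (sz : κ → ℕ) (start cur : α → κ) (g : κ → E)
    (r lo hi : ℝ) (b : α) : IsClosed (guessEvent π sz start cur g r lo hi b) :=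
  isClosed_const.inter (isClosed_Icc.preimage (continuous_guessedGain π sz start cur g b))

theorem dependsOn_guessEvent (π : α → ℕ) (sz : κ → ℕ) (start cur : α → κ) (g : κ → E)
    (r lo hi : ℝ) (b : α) :
    DependsOn (· ∈ guessEvent π sz start cur g r lo hi b) {a | π a ≤ π b} := fun x y h => by
  simp only [guessEvent, Set.mem_ofPred_eq, guessedGain_congr h]

end GuessedGain

section Sequence

variable {n k d : ℕ}

/-- The first of the iterations `0, …, L - 1` in which the point `a` is moved. It is `0` if `a` is
never moved. -/
noncomputable def firstMove (seq : ℕ → Fin n → Fin k) (L : ℕ) (a : Fin n) : ℕ :=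
  sInf {t : ℕ | t < L ∧ seq (t + 1) a ≠ seq t a}

/-- A sequence of `L` strictly improving Hartigan–Wong iterations in which exactly the points of
`A` move, with starting cluster sizes `sz` and order of first moves `π`. -/
structure IsImprovingSeq (X : Fin n → EuclideanSpace ℝ (Fin d)) (A : Finset (Fin n))
    (sz : Fin k → ℕ) (π : Fin n → ℕ) (L : ℕ) (seq : ℕ → Fin n → Fin k) : Prop where
  step : ∀ t < L, SingleMove (seq t) (seq (t + 1)) ∧ kmeansPot X (seq (t + 1)) < kmeansPot X (seq t)
  moved_eq : {x : Fin n | ∃ t < L, seq (t + 1) x ≠ seq t x} = ↑A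
  card_eq : ∀ i : Fin k, (clusterIdx (seq 0) i).card = sz i
  order : ∀ a ∈ A, ∀ b ∈ A, π a < π b → firstMove seq L a < firstMove seq L b

theorem eq_update_of_singleMove {cl cl' : Fin n → Fin k} (h : SingleMove cl cl') {b : Fin n}
    (hb : cl' b ≠ cl b) : cl' = Function.update cl b (cl' b) := by
  obtain ⟨j, -, hj⟩ := h
  obtain rfl : b = j := by_contra fun hne => hb (hj b hne)
  exact Function.eq_update_iff.2 ⟨rfl, hj⟩

theorem seq_eq_initial_of_le_firstMove {seq : ℕ → Fin n → Fin k} {L t : ℕ} {a : Fin n} (hL : t ≤ L)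
    (ht : t ≤ firstMove seq L a) : seq t a = seq 0 a := by
  induction t with
  | zero => rfl
  | succ t ih =>
    have hnotMem := Nat.notMem_of_lt_sInf (Nat.lt_of_succ_le ht)
    rw [← ih (by omega) (by omega)]
    by_contra hne
    exact hnotMem ⟨hL, hne⟩

namespace IsImprovingSeq

variable {X : Fin n → EuclideanSpace ℝ (Fin d)} {A : Finset (Fin n)} {sz : Fin k → ℕ}
  {π : Fin n → ℕ} {L : ℕ} {seq : ℕ → Fin n → Fin k}

theorem firstMove_spec (h : IsImprovingSeq X A sz π L seq) {a : Fin n} (ha : a ∈ A) :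
    firstMove seq L a < L ∧ seq (firstMove seq L a + 1) a ≠ seq (firstMove seq L a) a := by
  obtain ⟨t, ht⟩ : a ∈ {x : Fin n | ∃ t < L, seq (t + 1) x ≠ seq t x} :=
    h.moved_eq.ge (Finset.mem_coe.2 ha)
  exact Nat.sInf_mem (s := {t : ℕ | t < L ∧ seq (t + 1) a ≠ seq t a}) ⟨t, ht⟩

theorem seq_eq_initial_of_notMem (h : IsImprovingSeq X A sz π L seq) {a : Fin n} (ha : a ∉ A)
    {t : ℕ} (ht : t ≤ L) : seq t a = seq 0 a := by
  induction t with
  | zero => rfl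
  | succ t ih =>
    rw [← ih (by omega)]
    by_contra hne
    exact ha (Finset.mem_coe.1 (h.moved_eq.le ⟨t, ht, hne⟩))

theorem seq_firstMove_succ_eq_update (h : IsImprovingSeq X A sz π L seq) {b : Fin n} (hb : b ∈ A) :
    seq (firstMove seq L b + 1)
      = Function.update (seq (firstMove seq L b)) b (seq (firstMove seq L b + 1) b) :=
  eq_update_of_singleMove (h.step _ (h.firstMove_spec hb).1).1 (h.firstMove_spec hb).2

theorem seq_firstMove_eq_initial (h : IsImprovingSeq X A sz π L seq) {b : Fin n} (hb : b ∈ A) :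
    seq (firstMove seq L b) b = seq 0 b :=
  seq_eq_initial_of_le_firstMove (h.firstMove_spec hb).1.le le_rfl

theorem seq_firstMove_eq_initial_of_not_earlier (h : IsImprovingSeq X A sz π L seq)
    (hπ : Set.InjOn π A) {a b : Fin n} (hb : b ∈ A) (ha : a ∈ A → π b ≤ π a) :
    seq (firstMove seq L b) a = seq 0 a := by
  by_cases haA : a ∈ A
  · refine seq_eq_initial_of_le_firstMove (h.firstMove_spec hb).1.le ?_
    obtain heq | hlt := (ha haA).eq_or_lt
    · rw [hπ hb haA heq]
    · exact (h.order b hb a haA hlt).le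
  · exact h.seq_eq_initial_of_notMem haA (h.firstMove_spec hb).1.le

theorem kmeansPot_anti (h : IsImprovingSeq X A sz π L seq) {s t : ℕ} (hst : s ≤ t) (ht : t ≤ L) :
    kmeansPot X (seq t) ≤ kmeansPot X (seq s) := by
  induction t, hst using Nat.le_induction with
  | base => rfl
  | succ t _ ih => exact (h.step t ht).2.le.trans (ih (by omega))

theorem firstMove_improvement_le (h : IsImprovingSeq X A sz π L seq) {ε : ℝ}
    (hε : kmeansPot X (seq 0) - kmeansPot X (seq L) ≤ ε) {b : Fin n} (hb : b ∈ A) :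
    kmeansPot X (seq (firstMove seq L b)) - kmeansPot X (seq (firstMove seq L b + 1)) ≤ ε := by
  have hL := (h.firstMove_spec hb).1
  have h₀ := h.kmeansPot_anti (Nat.zero_le (firstMove seq L b)) hL.le
  have h₁ := h.kmeansPot_anti (Nat.succ_le_of_lt hL) le_rfl
  exact (sub_le_sub h₀ h₁).trans hε

theorem sum_clusterIdx_firstMove {V : Type*} [AddCommGroup V] (h : IsImprovingSeq X A sz π L seq)
    (hπ : Set.InjOn π A) (b : A) (v : Fin n → V) (i : Fin k) :
    ∑ j ∈ clusterIdx (seq (firstMove seq L b)) i, v j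
      = trackedSum (earlier (fun a : A => π a) b) (fun a => seq 0 a)
          (fun a => seq (firstMove seq L b + 1) a) (fun i => ∑ j ∈ clusterIdx (seq 0) i, v j)
          (fun a => v a) i := by
  have hcur : ∀ a ∈ earlier (fun a : A => π a) b,
      seq (firstMove seq L b) a = seq (firstMove seq L b + 1) a := fun a ha => by
    have hne : (a : Fin n) ≠ b := fun heq => by simp [earlier, heq] at ha
    rw [h.seq_firstMove_succ_eq_update b.2, Function.update_of_ne hne]
  rw [← trackedSum_congr hcur fun _ _ => rfl]
  refine sum_cluster_eq_trackedSum (Function.Embedding.subtype (· ∈ A)) (fun j hj => ?_) v i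
  refine h.seq_firstMove_eq_initial_of_not_earlier hπ b.2 fun hjA => not_lt.1 fun hlt => hj ?_
  exact Finset.mem_map.2 ⟨⟨j, hjA⟩, by simpa [earlier] using hlt, rfl⟩

theorem trackedSize_eq_card (h : IsImprovingSeq X A sz π L seq) (hπ : Set.InjOn π A) (b : A)
    (i : Fin k) :
    trackedSize (fun a : A => π a) sz (fun a => seq 0 a)
        (fun a => seq (firstMove seq L b + 1) a) b i
      = (clusterIdx (seq (firstMove seq L b)) i).card := by
  have hsum := h.sum_clusterIdx_firstMove hπ b (fun _ => (1 : ℝ)) i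
  simp only [Finset.sum_const, nsmul_eq_mul, mul_one, h.card_eq] at hsum
  exact hsum.symm

theorem norm_clusterCtr_sub_trackedCtr_le (h : IsImprovingSeq X A sz π L seq)
    (hπ : Set.InjOn π A) (b : A) {g : Fin k → EuclideanSpace ℝ (Fin d)} {δ : ℝ} {i : Fin k}
    (hg : ‖clusterCtr X (seq 0) i - g i‖ ≤ δ) :
    ‖clusterCtr X (seq (firstMove seq L b)) i
        - trackedCtr (fun a : A => π a) sz (fun a => seq 0 a)
            (fun a => seq (firstMove seq L b + 1) a) g b (fun a => X a) i‖ ≤ n * δ := by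
  have hbase : ∑ j ∈ clusterIdx (seq 0) i, X j = (sz i : ℝ) • clusterCtr X (seq 0) i := by
    rw [← h.card_eq]; exact (card_smul_mean _ X).symm
  have hsz : (sz i : ℝ) ≤ n := by
    rw [← h.card_eq]; exact_mod_cast card_clusterIdx_le (seq 0) i
  rw [clusterCtr, trackedCtr, h.trackedSize_eq_card hπ, h.sum_clusterIdx_firstMove hπ, ← smul_sub,
    trackedSum_sub_trackedSum, hbase, ← smul_sub, norm_smul, norm_smul, norm_inv,
    Real.norm_natCast, Real.norm_natCast]
  calc _ ≤ (1 : ℝ) * (n * δ) := by gcongr; exact Nat.cast_inv_le_one _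
    _ = n * δ := one_mul _

theorem two_le_card_source (h : IsImprovingSeq X A sz π L seq) {b : Fin n} (hb : b ∈ A) :
    2 ≤ (clusterIdx (seq (firstMove seq L b)) (seq 0 b)).card := by
  obtain ⟨hlt, hne⟩ := h.firstMove_spec hb
  rw [← h.seq_firstMove_eq_initial hb]
  exact two_le_card_of_kmeansPot_update_lt hne
    (h.seq_firstMove_succ_eq_update hb ▸ (h.step _ hlt).2)

theorem inv_le_gainCurvature (h : IsImprovingSeq X A sz π L seq) (hπ : Set.InjOn π A) (b : A) :
    (n : ℝ)⁻¹ ≤ gainCurvature (fun a : A => π a) sz (fun a => seq 0 a)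
      (fun a => seq (firstMove seq L b + 1) a) b := by
  rw [gainCurvature, h.trackedSize_eq_card hπ, h.trackedSize_eq_card hπ]
  refine inv_le_div_sub_div ?_ (Nat.cast_nonneg _) ?_
  · exact_mod_cast h.two_le_card_source b.2
  · exact_mod_cast card_clusterIdx_add_one_le (h.firstMove_spec b.2).2

theorem abs_improvement_sub_guessedGain_le (h : IsImprovingSeq X A sz π L seq)
    (hπ : Set.InjOn π A) (b : A) {g : Fin k → EuclideanSpace ℝ (Fin d)} {R δ : ℝ}
    (hX : ∀ j, ‖X j‖ ≤ R) (hg : ∀ i, ‖clusterCtr X (seq 0) i - g i‖ ≤ δ) :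
    |(kmeansPot X (seq (firstMove seq L b)) - kmeansPot X (seq (firstMove seq L b + 1)))
        - guessedGain (fun a : A => π a) sz (fun a => seq 0 a)
            (fun a => seq (firstMove seq L b + 1) a) g b (fun a => X a)|
      ≤ 3 * (n * δ * (2 * (2 * R) + n * δ)) := by
  have hR : 0 ≤ R := (norm_nonneg _).trans (hX b)
  have hdist (i : Fin k) : ‖X b - clusterCtr X (seq (firstMove seq L b)) i‖ ≤ 2 * R := by
    refine (norm_sub_le _ _).trans ((add_le_add (hX b) ?_).trans_eq (two_mul R).symm)
    exact norm_mean_le hR fun j _ => hX j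
  rw [h.seq_firstMove_succ_eq_update b.2, kmeansPot_sub_kmeansPot_update X (h.firstMove_spec b.2).2,
    ← h.seq_firstMove_succ_eq_update b.2, h.seq_firstMove_eq_initial b.2, guessedGain,
    h.trackedSize_eq_card hπ, h.trackedSize_eq_card hπ]
  exact abs_moveGain_sub_moveGain_le (by exact_mod_cast h.two_le_card_source b.2)
    (Nat.cast_nonneg _) (hdist _) (hdist _) (h.norm_clusterCtr_sub_trackedCtr_le hπ b (hg _))
    (h.norm_clusterCtr_sub_trackedCtr_le hπ b (hg _))

theorem mem_guessEvent (h : IsImprovingSeq X A sz π L seq) (hπ : Set.InjOn π A)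
    {g : Fin k → EuclideanSpace ℝ (Fin d)} {R δ η ε : ℝ} (hX : ∀ j, ‖X j‖ ≤ R)
    (hg : ∀ i, ‖clusterCtr X (seq 0) i - g i‖ ≤ δ)
    (hη : 3 * (n * δ * (2 * (2 * R) + n * δ)) ≤ η)
    (hε : kmeansPot X (seq 0) - kmeansPot X (seq L) ≤ ε) (b : A) :
    (fun a : A => X a) ∈ guessEvent (fun a : A => π a) sz (fun a => seq 0 a)
      (fun a => seq (firstMove seq L b + 1) a) g (n : ℝ)⁻¹ (-η) (ε + η) b := by
  have herr := abs_le.1 ((h.abs_improvement_sub_guessedGain_le hπ b hX hg).trans hη)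
  have hpos := (h.step _ (h.firstMove_spec b.2).1).2
  have hle := h.firstMove_improvement_le hε b.2
  exact ⟨h.inv_le_gainCurvature hπ b, by linarith, by linarith⟩

theorem update_seq_firstMove_succ_eq_initial (h : IsImprovingSeq X A sz π L seq)
    (hπ : Set.InjOn π A) {f : A} (hf : ∀ a : A, π f ≤ π a) :
    Function.update (fun a : A => seq (firstMove seq L f + 1) a) f (seq 0 f)
      = fun a : A => seq 0 a := by
  refine Function.update_eq_iff.2 ⟨rfl, fun a ha => ?_⟩
  rw [h.seq_firstMove_succ_eq_update f.2, Function.update_of_ne (Subtype.coe_ne_coe.2 ha)]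
  exact h.seq_firstMove_eq_initial_of_not_earlier hπ f.2 fun _ => hf a

end IsImprovingSeq

end Sequence

section Net

theorem exists_finset_net_Icc (a : ℝ) {h : ℝ} (hh : 0 < h) {N : ℕ} (hN : 0 < N) :
    ∃ G : Finset ℝ, G.card ≤ N ∧ ∀ v ∈ Set.Icc a (a + N * h), ∃ g ∈ G, |v - g| ≤ h := by
  refine ⟨(Finset.range N).image fun r : ℕ => a + r * h,
    Finset.card_image_le.trans_eq (Finset.card_range N), fun v hv => ?_⟩
  obtain ⟨u, rfl⟩ : ∃ u, v = a + u * h := ⟨(v - a) / h, by field_simp; ring⟩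
  have hu₀ : 0 ≤ u := nonneg_of_mul_nonneg_left (by linarith [hv.1]) hh
  have huN : u ≤ N := le_of_mul_le_mul_right (by linarith [hv.2]) hh
  obtain ⟨r, hrN, hr⟩ : ∃ r < N, |u - (r : ℝ)| ≤ 1 := by
    have hceil : ⌈u⌉₊ ≤ N := Nat.ceil_le.2 huN
    refine ⟨⌈u⌉₊ - 1, by omega, abs_le.2 ?_⟩
    have hlt := Nat.ceil_lt_add_one hu₀
    have hle := Nat.le_ceil u
    obtain hzero | hpos := ⌈u⌉₊.eq_zero_or_pos
    · rw [hzero] at hlt hle ⊢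
      constructor <;> norm_num at * <;> linarith
    · rw [Nat.cast_pred hpos]
      constructor <;> linarith
  refine ⟨a + r * h, Finset.mem_image_of_mem _ (Finset.mem_range.2 hrN), ?_⟩
  rw [add_sub_add_left_eq_sub, ← sub_mul, abs_mul, abs_of_pos hh]
  exact mul_le_of_le_one_left hh.le hr

variable {ι : Type*} [Fintype ι]

theorem norm_le_sqrt_card_mul {v : EuclideanSpace ℝ ι} {r : ℝ} (hr : 0 ≤ r)
    (hv : ∀ j, |v j| ≤ r) : ‖v‖ ≤ √(Fintype.card ι) * r := by
  rw [EuclideanSpace.norm_eq, ← Real.sqrt_sq hr, ← Real.sqrt_mul (Nat.cast_nonneg _)]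
  refine Real.sqrt_le_sqrt ?_
  calc ∑ j, ‖v j‖ ^ 2 ≤ ∑ _j : ι, r ^ 2 := by gcongr with j; exact hv j
    _ = Fintype.card ι * r ^ 2 := by simp

theorem exists_finset_net_cube (a : ℝ) {h : ℝ} (hh : 0 < h) {N : ℕ} (hN : 0 < N) :
    ∃ G : Finset (EuclideanSpace ℝ ι), G.card ≤ N ^ Fintype.card ι ∧
      ∀ v : EuclideanSpace ℝ ι, (∀ j, v j ∈ Set.Icc a (a + N * h)) →
        ∃ g ∈ G, ‖v - g‖ ≤ √(Fintype.card ι) * h := by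
  classical
  obtain ⟨G, hcard, hG⟩ := exists_finset_net_Icc a hh hN
  refine ⟨(Fintype.piFinset fun _ : ι => G).image (WithLp.toLp 2), ?_, fun v hv => ?_⟩
  · calc _ ≤ G.card ^ Fintype.card ι := Finset.card_image_le.trans_eq (by simp)
      _ ≤ N ^ Fintype.card ι := by gcongr
  · choose g hgG hg using fun j => hG (v j) (hv j)
    exact ⟨WithLp.toLp 2 g, Finset.mem_image_of_mem _ (Fintype.mem_piFinset.2 hgG),
      norm_le_sqrt_card_mul hh.le hg⟩

end Net

section Covering

variable {n k d : ℕ}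

theorem abs_clusterCtr_apply_le {X : Fin n → EuclideanSpace ℝ (Fin d)} {R : ℝ} (hR : 0 ≤ R)
    (hX : ∀ i j, |X i j| ≤ R) (cl : Fin n → Fin k) (i : Fin k) (j : Fin d) :
    |clusterCtr X cl i j| ≤ R := by
  have hcoord : clusterCtr X cl i j = mean (clusterIdx cl i) fun l => X l j := by
    simp [clusterCtr, mean]
  rw [hcoord, ← Real.norm_eq_abs]
  exact norm_mean_le hR fun l _ => hX l j

/-- The labels right after the first move of the whole sequence, that of `f`, are the starting
labels except at `f`, so that one more label besides the labels after each first move determines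
the starting labels. -/
theorem exists_mem_guessEvent {X : Fin n → EuclideanSpace ℝ (Fin d)} {A : Finset (Fin n)}
    {sz : Fin k → ℕ} {π : Fin n → ℕ} {L : ℕ} {seq : ℕ → Fin n → Fin k} {R δ η ε : ℝ}
    {G : Finset (EuclideanSpace ℝ (Fin d))} (h : IsImprovingSeq X A sz π L seq)
    (hπ : Set.InjOn π A) {f : A} (hf : ∀ a : A, π f ≤ π a) (hX : ∀ j, ‖X j‖ ≤ R)
    (hG : ∀ i, ∃ g ∈ G, ‖clusterCtr X (seq 0) i - g‖ ≤ δ)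
    (hη : 3 * (n * δ * (2 * (2 * R) + n * δ)) ≤ η)
    (hε : kmeansPot X (seq 0) - kmeansPot X (seq L) ≤ ε) :
    ∃ (g : Fin k → G) (i₀ : Fin k) (lab : A → A → Fin k), ∀ b : A,
      (fun a : A => X a) ∈ guessEvent (fun a : A => π a) sz (Function.update (lab f) f i₀) (lab b)
        (fun i => (g i : EuclideanSpace ℝ (Fin d))) (n : ℝ)⁻¹ (-η) (ε + η) b := by
  choose g hgG hg using hG
  refine ⟨fun i => ⟨g i, hgG i⟩, seq 0 f, fun b a => seq (firstMove seq L b + 1) a, fun b => ?_⟩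
  rw [h.update_seq_firstMove_succ_eq_initial hπ hf]
  exact h.mem_guessEvent hπ hX hg hη hε b

end Covering

section ProductMeasure

variable {ι : Type*} [Fintype ι] {Ω : ι → Type*} [∀ i, MeasurableSpace (Ω i)]

theorem pi_inter_le_mul [DecidableEq ι] (μ : ∀ i, Measure (Ω i)) [∀ i, IsProbabilityMeasure (μ i)]
    {a : ι} {B E : Set (∀ i, Ω i)} {δ : ENNReal} (hB : MeasurableSet B) (hE : MeasurableSet E)
    (hdep : DependsOn (· ∈ E) {a}ᶜ) (hδ : ∀ ω, μ a {x | Function.update ω a x ∈ B} ≤ δ) :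
    Measure.pi μ (B ∩ E) ≤ δ * Measure.pi μ E := by
  have hupdate (ω x) : Function.update ω a x ∈ E ↔ ω ∈ E :=
    (hdep fun _ hi => Function.update_of_ne hi _ _).to_iff
  rw [← lintegral_indicator_one (hB.inter hE), ← lintegral_indicator_one hE,
    ← lintegral_const_mul _ (measurable_one.indicator hE)]
  refine lintegral_le_of_lmarginal_le {a} (measurable_one.indicator (hB.inter hE))
    ((measurable_one.indicator hE).const_mul _) fun ω => ?_
  rw [lmarginal_singleton, lmarginal_singleton]
  by_cases hω : ω ∈ E
  · have hslice : MeasurableSet {x | Function.update ω a x ∈ B} := measurable_update ω hB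
    have hind : (fun x => (B ∩ E).indicator (1 : (∀ i, Ω i) → ENNReal) (Function.update ω a x))
        = {x | Function.update ω a x ∈ B}.indicator 1 := by
      ext x
      by_cases hx : Function.update ω a x ∈ B <;> simp [hx, hupdate, hω]
    beta_reduce
    rw [hind, lintegral_indicator_one hslice]
    simpa [hupdate, hω] using hδ ω
  · simp [hupdate, hω]

theorem pi_biInter_le_prod [DecidableEq ι] (μ : ∀ i, Measure (Ω i))
    [∀ i, IsProbabilityMeasure (μ i)] {π : ι → ℕ} {B : ι → Set (∀ i, Ω i)}
    {δ : ι → ENNReal} (s : Finset ι) (hπ : Set.InjOn π s)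
    (hB : ∀ b ∈ s, MeasurableSet (B b)) (hdep : ∀ b ∈ s, DependsOn (· ∈ B b) {c | π c ≤ π b})
    (hδ : ∀ b ∈ s, ∀ ω, μ b {x | Function.update ω b x ∈ B b} ≤ δ b) :
    Measure.pi μ (⋂ b ∈ s, B b) ≤ ∏ b ∈ s, δ b := by
  induction s using Finset.induction_on_max_value π with
  | empty => simp
  | insert a s ha hmax ih =>
    rw [Finset.forall_mem_insert] at hB hdep hδ
    have hlt : ∀ b ∈ s, π b < π a := fun b hb => (hmax b hb).lt_of_ne fun heq =>
      ha (hπ (by simp [hb]) (by simp) heq ▸ hb)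
    have hdepE : DependsOn (· ∈ ⋂ b ∈ s, B b) {a}ᶜ := fun x y hxy => by
      simp only [Set.mem_iInter]
      refine propext (forall₂_congr fun b hb => (hdep.2 b hb fun c hc => hxy c ?_).to_iff)
      rintro rfl
      exact (hlt b hb).not_ge hc
    rw [Finset.set_biInter_insert, Finset.prod_insert ha]
    calc Measure.pi μ (B a ∩ ⋂ b ∈ s, B b)
        ≤ δ a * Measure.pi μ (⋂ b ∈ s, B b) :=
          pi_inter_le_mul μ hB.1 (s.measurableSet_biInter hB.2) hdepE hδ.1
      _ ≤ δ a * ∏ b ∈ s, δ b := by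
          gcongr
          exact ih (hπ.mono (by simp)) hB.2 hdep.2 hδ.2

theorem cond_pi_eq (μ : ∀ i, Measure (Ω i)) [∀ i, IsFiniteMeasure (μ i)] {B : ∀ i, Set (Ω i)}
    (hB : ∀ i, MeasurableSet (B i)) (hpos : ∀ i, μ i (B i) ≠ 0) :
    (Measure.pi μ)[|Set.univ.pi B] = Measure.pi fun i => (μ i)[|B i] := by
  refine (Measure.pi_eq fun s _ => ?_).symm
  simp only [cond_apply (MeasurableSet.univ_pi hB), cond_apply (hB _), ← Set.pi_inter_distrib,
    Measure.pi_pi]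
  rw [Finset.prod_mul_distrib, ENNReal.prod_inv_distrib fun i _ _ _ _ => Or.inl (hpos i)]

theorem pi_restrict_preimage_le (μ : ∀ i, Measure (Ω i)) [∀ i, IsProbabilityMeasure (μ i)]
    (A : Finset ι) (S : Set (∀ a : A, Ω a)) :
    Measure.pi μ (A.restrict ⁻¹' S) ≤ Measure.pi (fun a : A => μ a) S := by
  have hmap : (Measure.pi μ).map A.restrict = Measure.pi fun a : A => μ a := by
    rw [← Measure.infinitePi_eq_pi, Measure.infinitePi_map_restrict]
  exact hmap ▸ Measure.le_map_apply (Finset.measurable_restrict A).aemeasurable S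

end ProductMeasure

section Shell

theorem abs_sub_le_sqrt_abs_sq_sub_sq {s t : ℝ} (h : 0 ≤ s * t) : |s - t| ≤ √|s ^ 2 - t ^ 2| := by
  have hle : |s - t| ≤ |s + t| := sq_le_sq.1 (by linarith)
  refine Real.le_sqrt_of_sq_le ?_
  rw [sq_sub_sq, abs_mul, sq]
  gcongr

theorem volume_sq_sub_mem_Icc_le (z lo l : ℝ) :
    volume {y : ℝ | (y - z) ^ 2 ∈ Set.Icc lo (lo + l)} ≤ ENNReal.ofReal (2 * √l) := by
  set T := {y : ℝ | (y - z) ^ 2 ∈ Set.Icc lo (lo + l)}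
  have hhalf {U : Set ℝ} (hU : U ⊆ T) (hsign : ∀ s ∈ U, ∀ t ∈ U, 0 ≤ (s - z) * (t - z)) :
      volume U ≤ ENNReal.ofReal √l := by
    refine (Real.volume_le_diam U).trans (Metric.ediam_le fun s hs t ht => ?_)
    rw [edist_dist, Real.dist_eq, ← sub_sub_sub_cancel_right s t z]
    refine ENNReal.ofReal_le_ofReal ((abs_sub_le_sqrt_abs_sq_sub_sq (hsign s hs t ht)).trans ?_)
    exact Real.sqrt_le_sqrt (abs_le.2 ⟨by linarith [(hU hs).1, (hU ht).2],
      by linarith [(hU hs).2, (hU ht).1]⟩)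
  calc volume T = volume (T ∩ Set.Ici z ∪ T ∩ Set.Iic z) := by
        rw [← Set.inter_union_distrib_left, Set.union_comm, Set.Iic_union_Ici, Set.inter_univ]
    _ ≤ ENNReal.ofReal √l + ENNReal.ofReal √l :=
        (measure_union_le _ _).trans <| add_le_add
          (hhalf Set.inter_subset_left fun s hs t ht =>
            mul_nonneg (sub_nonneg.2 hs.2) (sub_nonneg.2 ht.2))
          (hhalf Set.inter_subset_left fun s hs t ht =>
            mul_nonneg_of_nonpos_of_nonpos (sub_nonpos.2 hs.2) (sub_nonpos.2 ht.2))
    _ = ENNReal.ofReal (2 * √l) := by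
        rw [← ENNReal.ofReal_add (Real.sqrt_nonneg l) (Real.sqrt_nonneg l), two_mul]

variable {ι : Type*} [Fintype ι]

theorem pi_norm_sq_sub_mem_Icc_le [Nonempty ι] (ν : ι → Measure ℝ)
    [∀ r, IsProbabilityMeasure (ν r)] {K : ENNReal} (hν : ∀ r, ν r ≤ K • volume)
    (z : EuclideanSpace ℝ ι) (lo l : ℝ) :
    Measure.pi ν {x | ‖WithLp.toLp 2 x - z‖ ^ 2 ∈ Set.Icc lo (lo + l)}
      ≤ K * ENNReal.ofReal (2 * √l) := by
  classical
  set B := {x : ι → ℝ | ‖WithLp.toLp 2 x - z‖ ^ 2 ∈ Set.Icc lo (lo + l)}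
  have hB : MeasurableSet B := (isClosed_Icc.preimage (by fun_prop)).measurableSet
  obtain ⟨r⟩ := ‹Nonempty ι›
  suffices hslice : ∀ ω, ν r {y | Function.update ω r y ∈ B} ≤ K * ENNReal.ofReal (2 * √l) by
    simpa using pi_inter_le_mul ν hB MeasurableSet.univ (fun _ _ _ => rfl) hslice
  intro ω
  set rest := ∑ i ∈ Finset.univ.erase r, (ω i - z i) ^ 2
  have hnorm (y : ℝ) :
      ‖WithLp.toLp 2 (Function.update ω r y) - z‖ ^ 2 = (y - z r) ^ 2 + rest := by
    rw [EuclideanSpace.real_norm_sq_eq, ← Finset.add_sum_erase _ _ (Finset.mem_univ r)]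
    congr 1
    · simp
    · refine Finset.sum_congr rfl fun i hi => ?_
      simp [Finset.ne_of_mem_erase hi]
  calc ν r {y | Function.update ω r y ∈ B}
      ≤ ν r {y | (y - z r) ^ 2 ∈ Set.Icc (lo - rest) (lo - rest + l)} := by
        refine measure_mono fun y hy => ?_
        have hy' : ‖WithLp.toLp 2 (Function.update ω r y) - z‖ ^ 2 ∈ Set.Icc lo (lo + l) := hy
        rw [hnorm] at hy'
        exact ⟨by linarith [hy'.1], by linarith [hy'.2]⟩
    _ ≤ K * volume {y | (y - z r) ^ 2 ∈ Set.Icc (lo - rest) (lo - rest + l)} := hν r _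
    _ ≤ K * ENNReal.ofReal (2 * √l) := by gcongr; exact volume_sq_sub_mem_Icc_le _ _ _

end Shell

section GuessProbability

variable {α κ ι : Type*} [Fintype α] [DecidableEq κ] [Fintype ι]

theorem pi_moveGain_mem_Icc_le [Nonempty ι] (ν : ι → Measure ℝ) [∀ r, IsProbabilityMeasure (ν r)]
    {K : ENNReal} (hν : ∀ r, ν r ≤ K • volume) {p q r l : ℝ} (hr : 0 < r)
    (hpq : r ≤ p / (p - 1) - q / (q + 1)) (hl : 0 ≤ l) (c c' : EuclideanSpace ℝ ι) (lo : ℝ) :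
    Measure.pi ν {y | moveGain p q c c' (WithLp.toLp 2 y) ∈ Set.Icc lo (lo + l)}
      ≤ K * ENNReal.ofReal (2 * √(l / r)) := by
  have hpos : 0 < p / (p - 1) - q / (q + 1) := hr.trans_le hpq
  obtain ⟨z, γ, hz⟩ := exists_weighted_norm_sq_sub_eq hpos.ne' c c'
  refine le_trans (measure_mono fun y hy => ?_)
    (pi_norm_sq_sub_mem_Icc_le ν hν z ((lo - γ) / (p / (p - 1) - q / (q + 1))) (l / r))
  obtain ⟨hlo, hhi⟩ : moveGain p q c c' (WithLp.toLp 2 y) ∈ Set.Icc lo (lo + l) := hy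
  rw [moveGain, hz] at hlo hhi
  constructor
  · rw [div_le_iff₀' hpos]
    linarith
  · calc ‖WithLp.toLp 2 y - z‖ ^ 2
        ≤ (lo - γ + l) / (p / (p - 1) - q / (q + 1)) := by rw [le_div_iff₀' hpos]; linarith
      _ ≤ (lo - γ) / (p / (p - 1) - q / (q + 1)) + l / r := by rw [add_div]; gcongr

theorem pi_forall_mem_guessEvent_le [Nonempty ι] (ν : α → ι → Measure ℝ)
    [∀ a r, IsProbabilityMeasure (ν a r)] {K : ENNReal} (hν : ∀ a r, ν a r ≤ K • volume)
    {π : α → ℕ} (hπ : Function.Injective π) (sz : κ → ℕ) (start : α → κ) (cur : α → α → κ)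
    (g : κ → EuclideanSpace ℝ ι) {r lo hi : ℝ} (hr : 0 < r) (hlohi : lo ≤ hi) :
    (Measure.pi fun a => Measure.pi (ν a))
        {x | ∀ b, (fun a => WithLp.toLp 2 (x a)) ∈ guessEvent π sz start (cur b) g r lo hi b}
      ≤ (K * ENNReal.ofReal (2 * √((hi - lo) / r))) ^ Fintype.card α := by
  classical
  set B : α → Set (α → ι → ℝ) := fun b =>
    {x | (fun a => WithLp.toLp 2 (x a)) ∈ guessEvent π sz start (cur b) g r lo hi b}
  have hB (b : α) : MeasurableSet (B b) :=
    ((isClosed_guessEvent π sz start (cur b) g r lo hi b).preimage (by fun_prop)).measurableSet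
  have hdep (b : α) : DependsOn (· ∈ B b) {a | π a ≤ π b} := fun x y hxy =>
    dependsOn_guessEvent π sz start (cur b) g r lo hi b fun a ha => by simp only [hxy a ha]
  have hslice (b : α) (x : α → ι → ℝ) : Measure.pi (ν b) {y | Function.update x b y ∈ B b}
      ≤ K * ENNReal.ofReal (2 * √((hi - lo) / r)) := by
    by_cases hcurv : r ≤ gainCurvature π sz start (cur b) b
    · refine (measure_mono fun y hy => ?_).trans (pi_moveGain_mem_Icc_le (ν b) (hν b) hr hcurv
        (sub_nonneg.2 hlohi)
        (trackedCtr π sz start (cur b) g b (fun a => WithLp.toLp 2 (x a)) (start b))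
        (trackedCtr π sz start (cur b) g b (fun a => WithLp.toLp 2 (x a)) (cur b b)) lo)
      have hupdate : (fun a => WithLp.toLp 2 (Function.update x b y a))
          = Function.update (fun a => WithLp.toLp 2 (x a)) b (WithLp.toLp 2 y) :=
        funext (Function.apply_update (fun _ => WithLp.toLp 2) x b y)
      have hmem := hy.2
      rwa [hupdate, guessedGain_update, ← add_sub_cancel lo hi] at hmem
    · simp [B, guessEvent, hcurv]
  have hchain := pi_biInter_le_prod (fun a => Measure.pi (ν a)) Finset.univ hπ.injOn
    (fun b _ => hB b) (fun b _ => hdep b) fun b _ => hslice b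
  simpa [Set.ofPred_forall, B] using hchain

end GuessProbability

section Gaussian

open scoped NNReal

theorem gaussianReal_le_smul_volume (m : ℝ) {v : ℝ≥0} (hv : v ≠ 0) :
    gaussianReal m v ≤ ENNReal.ofReal (√(2 * Real.pi * v))⁻¹ • volume := by
  rw [gaussianReal_of_var_ne_zero m hv, ← withDensity_const]
  refine withDensity_mono (.of_forall fun x => ENNReal.ofReal_le_ofReal ?_)
  refine mul_le_of_le_one_right (by positivity) (Real.exp_le_one_iff.2 ?_)
  exact div_nonpos_of_nonpos_of_nonneg (neg_nonpos.2 (sq_nonneg _)) (by positivity)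

theorem le_gaussianReal_Icc (m : ℝ) {v : ℝ≥0} (hv : v ≠ 0) :
    ENNReal.ofReal ((√(2 * Real.pi * v))⁻¹ * (√v / 2))
      ≤ gaussianReal m v (Set.Icc (m - √v) m) := by
  have hpdf : ∀ x ∈ Set.Icc (m - √v) m,
      ENNReal.ofReal ((√(2 * Real.pi * v))⁻¹ / 2) ≤ gaussianPDF m v x := fun x hx => by
    have hsq : (x - m) ^ 2 ≤ v := by
      rw [← Real.sq_sqrt v.coe_nonneg]
      exact sq_le_sq' (by linarith [hx.1]) (by linarith [hx.2, Real.sqrt_nonneg v])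
    have hexponent : -(1 / 2) ≤ -(x - m) ^ 2 / (2 * v) := by
      rw [le_div_iff₀ (by positivity)]
      linarith
    refine ENNReal.ofReal_le_ofReal ?_
    rw [gaussianPDFReal, div_eq_mul_inv]
    gcongr
    linarith [Real.add_one_le_exp (-(x - m) ^ 2 / (2 * v))]
  calc ENNReal.ofReal ((√(2 * Real.pi * v))⁻¹ * (√v / 2))
      = ∫⁻ _ in Set.Icc (m - √v) m, ENNReal.ofReal ((√(2 * Real.pi * v))⁻¹ / 2) := by
        rw [setLIntegral_const, Real.volume_Icc, ← ENNReal.ofReal_mul (by positivity)]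
        congr 1
        ring
    _ ≤ ∫⁻ x in Set.Icc (m - √v) m, gaussianPDF m v x :=
        setLIntegral_mono (measurable_gaussianPDF m v) hpdf
    _ = gaussianReal m v (Set.Icc (m - √v) m) := (gaussianReal_apply m hv _).symm

theorem gaussianReal_ne_zero_of_Icc_subset {m : ℝ} {v : ℝ≥0} (hv : v ≠ 0) {S : Set ℝ}
    (hS : Set.Icc (m - √v) m ⊆ S) : gaussianReal m v S ≠ 0 := by
  have hpos : 0 < (√(2 * Real.pi * v))⁻¹ * (√v / 2) := by positivity
  exact ((ENNReal.ofReal_pos.2 hpos).trans_le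
    ((le_gaussianReal_Icc m hv).trans (measure_mono hS))).ne'

theorem cond_gaussianReal_le_smul_volume {m : ℝ} {v : ℝ≥0} (hv : v ≠ 0) {S : Set ℝ}
    (hS : Set.Icc (m - √v) m ⊆ S) :
    (gaussianReal m v)[|S] ≤ ENNReal.ofReal (2 / √v) • volume := by
  have hpos : 0 < (√(2 * Real.pi * v))⁻¹ * (√v / 2) := by positivity
  have hinv : (gaussianReal m v S)⁻¹
      ≤ ENNReal.ofReal ((√(2 * Real.pi * v))⁻¹ * (√v / 2))⁻¹ := by
    rw [ENNReal.ofReal_inv_of_pos hpos]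
    exact ENNReal.inv_le_inv.2 ((le_gaussianReal_Icc m hv).trans (measure_mono hS))
  refine Measure.le_iff'.2 fun T => ?_
  calc (gaussianReal m v)[|S] T = (gaussianReal m v S)⁻¹ * (gaussianReal m v).restrict S T := rfl
    _ ≤ ENNReal.ofReal ((√(2 * Real.pi * v))⁻¹ * (√v / 2))⁻¹
          * (ENNReal.ofReal (√(2 * Real.pi * v))⁻¹ * volume T) :=
        mul_le_mul' hinv ((Measure.restrict_le_self T).trans (gaussianReal_le_smul_volume m hv T))
    _ = ENNReal.ofReal (2 / √v) * volume T := by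
        rw [← mul_assoc, ← ENNReal.ofReal_mul (by positivity)]
        congr 2
        field_simp

end Gaussian

section UnionBound

variable {n k d : ℕ}

/-- The point sets contained in the cube `[-R, R]^d`. -/
def box (n d : ℕ) (R : ℝ) : Set (Fin n → Fin d → ℝ) :=
  {ω | ∀ i j, ω i j ∈ Set.Icc (-R) R}

/-- The event that some improving sequence with active set `A`, starting sizes `sz` and order of
first moves `π` decreases the potential by at most `ε`. -/
def improvementEvent (d : ℕ) (A : Finset (Fin n)) (sz : Fin k → ℕ) (π : Fin n → ℕ) (ε : ℝ) :
    Set (Fin n → Fin d → ℝ) :=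
  {ω | ∃ (L : ℕ) (seq : ℕ → Fin n → Fin k), IsImprovingSeq (fun i => toEuc (ω i)) A sz π L seq ∧
    kmeansPot (fun i => toEuc (ω i)) (seq 0) - kmeansPot (fun i => toEuc (ω i)) (seq L) ≤ ε}

/-- What the union bound ranges over: approximate starting centers from the net `G`, the starting
label of the first point to move, and the labels of the active points right after each first
move. -/
abbrev Guess (k : ℕ) (A : Finset (Fin n)) (G : Finset (EuclideanSpace ℝ (Fin d))) : Type :=
  (Fin k → G) × Fin k × (A → A → Fin k)

/-- The positions of the active points for which all first moves are compatible with the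
guess `q`, where `f` is the first point to move and `η` bounds the error from approximating the
starting centers. -/
def guessSet (sz : Fin k → ℕ) (π : Fin n → ℕ) {A : Finset (Fin n)}
    {G : Finset (EuclideanSpace ℝ (Fin d))} (f : A) (η ε : ℝ) (q : Guess k A G) :
    Set (A → Fin d → ℝ) :=
  {x | ∀ b : A, (fun a => WithLp.toLp 2 (x a)) ∈ guessEvent (fun a : A => π a) sz
    (Function.update (q.2.2 f) f q.2.1) (q.2.2 b) (fun i => (q.1 i : EuclideanSpace ℝ (Fin d)))
    (n : ℝ)⁻¹ (-η) (ε + η) b}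

theorem exists_finset_net_symm_cube {D ε : ℝ} (hε : 0 < ε) (hεD : ε ≤ D) (d : ℕ) :
    ∃ G : Finset (EuclideanSpace ℝ (Fin d)), (G.card : ℝ) ≤ (D / ε) ^ d ∧
      ∀ v : EuclideanSpace ℝ (Fin d), (∀ j, |v j| ≤ D / 2) → ∃ g ∈ G, ‖v - g‖ ≤ √d * (2 * ε) := by
  have hquot : 1 ≤ D / ε := (one_le_div hε).2 hεD
  have hN : 0 < ⌊D / ε⌋₊ := Nat.floor_pos.2 hquot
  have hcover : D ≤ ⌊D / ε⌋₊ * (2 * ε) := by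
    have hone : (1 : ℝ) ≤ ⌊D / ε⌋₊ := by exact_mod_cast hN
    have hlt : D < (⌊D / ε⌋₊ + 1) * ε := (div_lt_iff₀ hε).1 (Nat.lt_floor_add_one _)
    nlinarith
  obtain ⟨G, hcard, hG⟩ :=
    exists_finset_net_cube (ι := Fin d) (-(D / 2)) (mul_pos two_pos hε) hN
  rw [Fintype.card_fin] at hcard
  refine ⟨G, ?_, fun v hv => ?_⟩
  · calc (G.card : ℝ) ≤ (⌊D / ε⌋₊ : ℝ) ^ d := by exact_mod_cast hcard
      _ ≤ (D / ε) ^ d := by gcongr; exact Nat.floor_le (by linarith)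
  · simpa using hG v fun j => ⟨(abs_le.1 (hv j)).1, by linarith [(abs_le.1 (hv j)).2]⟩

theorem box_inter_improvementEvent_subset {A : Finset (Fin n)} {π : Fin n → ℕ}
    (hπ : Set.InjOn π A) {f : A} (hf : ∀ a : A, π f ≤ π a) {D ε : ℝ} (hD : 1 ≤ D) (hε : 0 < ε)
    (hnε : n * ε ≤ 1) {G : Finset (EuclideanSpace ℝ (Fin d))}
    (hG : ∀ v : EuclideanSpace ℝ (Fin d), (∀ j, |v j| ≤ D / 2) →
      ∃ g ∈ G, ‖v - g‖ ≤ √d * (2 * ε)) (sz : Fin k → ℕ) :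
    box n d (D / 2) ∩ improvementEvent d A sz π ε
      ⊆ ⋃ q : Guess k A G, A.restrict ⁻¹' guessSet sz π f (24 * d * n * ε * D) ε q := by
  rintro ω ⟨hbox, L, seq, hseq, himp⟩
  have hR : 0 ≤ D / 2 := by linarith
  have hcoord (i j) : |toEuc (ω i) j| ≤ D / 2 := abs_le.2 (hbox i j)
  have hnorm (i) : ‖toEuc (ω i)‖ ≤ √d * (D / 2) := by
    simpa using norm_le_sqrt_card_mul hR (hcoord i)
  have herr : 3 * (n * (√d * (2 * ε)) * (2 * (2 * (√d * (D / 2))) + n * (√d * (2 * ε))))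
      ≤ 24 * d * n * ε * D :=
    calc _ = 12 * (√d * √d) * n * ε * (D + n * ε) := by ring
      _ = 12 * d * n * ε * (D + n * ε) := by rw [Real.mul_self_sqrt (Nat.cast_nonneg d)]
      _ ≤ 12 * d * n * ε * (D + D) := by gcongr; exact hnε.trans hD
      _ = 24 * d * n * ε * D := by ring
  obtain ⟨g, i₀, lab, hguess⟩ := exists_mem_guessEvent hseq hπ hf hnorm
    (fun i => hG _ (abs_clusterCtr_apply_le hR hcoord (seq 0) i)) herr himp
  exact Set.mem_iUnion.2 ⟨(g, i₀, lab), hguess⟩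

theorem sqrt_window_div_inv_le {D ε : ℝ} (hn : 0 < n) (hd : 0 < d) (hD : 1 ≤ D) (hε : 0 < ε) :
    √((ε + 24 * d * n * ε * D - -(24 * d * n * ε * D)) / (n : ℝ)⁻¹) ≤ 7 * n * √(d * D * ε) := by
  have hnd : (1 : ℝ) ≤ n * d := by exact_mod_cast Nat.mul_pos hn hd
  have hone : 1 ≤ n * d * D := one_le_mul_of_one_le_of_one_le hnd hD
  rw [div_inv_eq_mul]
  refine Real.sqrt_le_iff.2 ⟨by positivity, ?_⟩
  calc (ε + 24 * d * n * ε * D - -(24 * d * n * ε * D)) * n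
      = ε * n * 1 + 48 * (ε * n * (n * d * D)) := by ring
    _ ≤ ε * n * (n * d * D) + 48 * (ε * n * (n * d * D)) := by gcongr
    _ = (7 * n) ^ 2 * (d * D * ε) := by ring
    _ = (7 * n * √(d * D * ε)) ^ 2 := by rw [mul_pow _ √_, Real.sq_sqrt (by positivity)]

variable (ν : Fin n → Fin d → Measure ℝ) [∀ i j, IsProbabilityMeasure (ν i j)] {K : ENNReal}

theorem pi_restrict_preimage_guessSet_le (hν : ∀ i j, ν i j ≤ K • volume) (hd : 0 < d)
    {A : Finset (Fin n)} {π : Fin n → ℕ} (hπ : Set.InjOn π A) (f : A) {D ε : ℝ} (hD : 1 ≤ D)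
    (hε : 0 < ε) {G : Finset (EuclideanSpace ℝ (Fin d))} (sz : Fin k → ℕ) (q : Guess k A G) :
    (Measure.pi fun i => Measure.pi (ν i))
        (A.restrict ⁻¹' guessSet sz π f (24 * d * n * ε * D) ε q)
      ≤ (K * ENNReal.ofReal (14 * n * √(d * D * ε))) ^ A.card := by
  have : Nonempty (Fin d) := ⟨⟨0, hd⟩⟩
  have hn : 0 < n := Fin.pos f
  have hη : 0 ≤ 24 * d * n * ε * D := by positivity
  refine (pi_restrict_preimage_le _ A _).trans ?_
  refine (pi_forall_mem_guessEvent_le (fun a : A => ν a) (fun a => hν a) hπ.injective sz _ _ _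
    (by positivity) (by linarith)).trans ?_
  rw [Fintype.card_coe]
  gcongr (K * ENNReal.ofReal ?_) ^ _
  linarith [sqrt_window_div_inv_le hn hd hD hε]

theorem card_guess (k : ℕ) (A : Finset (Fin n)) (G : Finset (EuclideanSpace ℝ (Fin d))) :
    Fintype.card (Guess k A G) = G.card ^ k * k * (k ^ A.card) ^ A.card := by
  simp only [Fintype.card_prod, Fintype.card_fun, Fintype.card_fin, Fintype.card_coe, mul_assoc]

theorem pi_box_inter_improvementEvent_le (hν : ∀ i j, ν i j ≤ K • volume) (hd : 0 < d)
    {A : Finset (Fin n)} (hA : A.Nonempty) {π : Fin n → ℕ} (hπ : Set.InjOn π A) {D ε : ℝ}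
    (hD : 1 ≤ D) (hε : 0 < ε) (hnε : n * ε ≤ 1) (sz : Fin k → ℕ) :
    (Measure.pi fun i => Measure.pi (ν i)) (box n d (D / 2) ∩ improvementEvent d A sz π ε)
      ≤ ENNReal.ofReal (((D / ε) ^ d) ^ k * k * (k ^ A.card) ^ A.card)
        * (K * ENNReal.ofReal (14 * n * √(d * D * ε))) ^ A.card := by
  obtain ⟨f, hfA, hf⟩ := A.exists_min_image π hA
  have hn : (1 : ℝ) ≤ n := by exact_mod_cast Fin.pos f
  have hε₁ : ε ≤ 1 := (le_mul_of_one_le_left hε.le hn).trans hnε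
  obtain ⟨G, hcard, hG⟩ := exists_finset_net_symm_cube hε (hε₁.trans hD) d
  set δ := (K * ENNReal.ofReal (14 * n * √(d * D * ε))) ^ A.card
  calc _ ≤ (Measure.pi fun i => Measure.pi (ν i)) (⋃ q : Guess k A G,
          A.restrict ⁻¹' guessSet sz π ⟨f, hfA⟩ (24 * d * n * ε * D) ε q) :=
        measure_mono (box_inter_improvementEvent_subset hπ (fun a => hf a a.2) hD hε hnε hG sz)
    _ ≤ ∑ _q : Guess k A G, δ := (measure_iUnion_fintype_le _ _).trans <|
        Finset.sum_le_sum fun q _ => pi_restrict_preimage_guessSet_le ν hν hd hπ _ hD hε sz q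
    _ = ENNReal.ofReal (G.card ^ k * k * (k ^ A.card) ^ A.card) * δ := by
        rw [Finset.sum_const, Finset.card_univ, card_guess, nsmul_eq_mul,
          ← ENNReal.ofReal_natCast]
        push_cast
        rfl
    _ ≤ ENNReal.ofReal (((D / ε) ^ d) ^ k * k * (k ^ A.card) ^ A.card) * δ := by gcongr

end UnionBound

section Perturbation

variable {n d : ℕ} {Y : Fin n → Fin d → ℝ} {σ : ℝ}

theorem box_eq_pi (n d : ℕ) (R : ℝ) :
    box n d R = Set.univ.pi fun _ => Set.univ.pi fun _ => Set.Icc (-R) R := by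
  simp only [Set.pi, Set.mem_univ, true_implies]
  rfl

theorem measurableSet_box (n d : ℕ) (R : ℝ) : MeasurableSet (box n d R) := by
  rw [box_eq_pi]
  exact .univ_pi fun _ => .univ_pi fun _ => measurableSet_Icc

theorem sqrt_toNNReal_sq (hσ : 0 ≤ σ) : √((σ ^ 2).toNNReal : ℝ) = σ := by
  rw [Real.coe_toNNReal _ (sq_nonneg σ), Real.sqrt_sq hσ]

theorem toNNReal_sq_ne_zero (hσ : σ ≠ 0) : (σ ^ 2).toNNReal ≠ 0 :=
  (Real.toNNReal_pos.2 (sq_pos_of_ne_zero hσ)).ne'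

theorem perturbedPoints_box_zero (hn : 0 < n) (hd : 0 < d) (Y : Fin n → Fin d → ℝ) (hσ : σ ≠ 0) :
    perturbedPoints n d Y σ (box n d 0) = 0 := by
  have hpoint (i j) : gaussianReal (Y i j) (σ ^ 2).toNNReal (Set.Icc (-0) 0) = 0 := by
    rw [gaussianReal_apply _ (toNNReal_sq_ne_zero hσ)]
    simp
  rw [box_eq_pi, perturbedPoints, Measure.pi_pi]
  refine Finset.prod_eq_zero (Finset.mem_univ ⟨0, hn⟩) ?_
  rw [Measure.pi_pi]
  exact Finset.prod_eq_zero (Finset.mem_univ ⟨0, hd⟩) (hpoint _ _)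

theorem Icc_sub_sqrt_subset {m R : ℝ} (hm : m ∈ Set.Icc (0 : ℝ) 1) (hσ : 0 ≤ σ) (hσ₁ : σ ≤ 1)
    (hR : 1 ≤ R) : Set.Icc (m - √((σ ^ 2).toNNReal : ℝ)) m ⊆ Set.Icc (-R) R := by
  rw [sqrt_toNNReal_sq hσ]
  exact Set.Icc_subset_Icc (by linarith [hm.1]) (by linarith [hm.2])

theorem cond_perturbedPoints_box (hY : ∀ i j, Y i j ∈ Set.Icc (0 : ℝ) 1) (hσ : 0 < σ)
    (hσ₁ : σ ≤ 1) {R : ℝ} (hR : 1 ≤ R) :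
    (perturbedPoints n d Y σ)[|box n d R] = Measure.pi fun i => Measure.pi fun j =>
      (gaussianReal (Y i j) (σ ^ 2).toNNReal)[|Set.Icc (-R) R] := by
  have hpos (i j) : gaussianReal (Y i j) (σ ^ 2).toNNReal (Set.Icc (-R) R) ≠ 0 :=
    gaussianReal_ne_zero_of_Icc_subset (toNNReal_sq_ne_zero hσ.ne')
      (Icc_sub_sqrt_subset (hY i j) hσ.le hσ₁ hR)
  rw [box_eq_pi, perturbedPoints, cond_pi_eq _ fun _ => .univ_pi fun _ => measurableSet_Icc]
  · simp only [cond_pi_eq _ (fun _ => measurableSet_Icc) (hpos _)]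
  · intro i
    rw [Measure.pi_pi]
    exact Finset.prod_ne_zero_iff.2 fun j _ => hpos i j

theorem cond_perturbedPoints_improvementEvent_le {k : ℕ} (hd : 0 < d) {A : Finset (Fin n)}
    (hA : A.Nonempty) {π : Fin n → ℕ} (hπ : Set.InjOn π A)
    (hY : ∀ i j, Y i j ∈ Set.Icc (0 : ℝ) 1) (hσ : 0 < σ) (hσ₁ : σ ≤ 1) {D ε : ℝ} (hD : 2 ≤ D)
    (hε : 0 < ε) (hnε : n * ε ≤ 1) (sz : Fin k → ℕ) :
    (perturbedPoints n d Y σ)[|box n d (D / 2)] (improvementEvent d A sz π ε)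
      ≤ ENNReal.ofReal (((D / ε) ^ d) ^ k * k * (k ^ A.card) ^ A.card
          * (2 / σ * (14 * n * √(d * D * ε))) ^ A.card) := by
  have hR : 1 ≤ D / 2 := by linarith
  have hv := toNNReal_sq_ne_zero hσ.ne'
  have hIcc (i j) := Icc_sub_sqrt_subset (hY i j) hσ.le hσ₁ hR
  have hprob (i j) := cond_isProbabilityMeasure (gaussianReal_ne_zero_of_Icc_subset hv (hIcc i j))
  have hdens (i j) := cond_gaussianReal_le_smul_volume hv (hIcc i j)
  rw [← cond_inter_self (measurableSet_box n d (D / 2)), cond_perturbedPoints_box hY hσ hσ₁ hR]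
  refine (pi_box_inter_improvementEvent_le _ hdens hd hA hπ (by linarith) hε hnε sz).trans_eq ?_
  rw [sqrt_toNNReal_sq hσ.le, ← ENNReal.ofReal_mul (by positivity),
    ← ENNReal.ofReal_pow (by positivity), ← ENNReal.ofReal_mul (by positivity)]

end Perturbation

section Bound

variable {n k d m : ℕ} {D ε σ : ℝ}

/-- The bound on the probability in terms of `D`, the size `m` of the active set and the
constant `c`. -/
noncomputable def probBound (c : ℝ) (n k d m : ℕ) (D ε σ : ℝ) : ℝ :=
  (2 * D / ε) ^ (k * d)
    * (c * (k : ℝ) ^ m * (d : ℝ) ^ ((3 : ℝ) / 4) * D * n * m * √ε / σ) ^ m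

theorem card_mul_pow_le_pow (hd : 0 < d) (hD : 0 ≤ D) (hε : 0 < ε) :
    ((D / ε) ^ d) ^ k * k ≤ (2 * D / ε) ^ (k * d) := by
  have hk : k ≤ 2 ^ (k * d) := Nat.lt_two_pow_self.le.trans
    (Nat.pow_le_pow_right two_pos (Nat.le_mul_of_pos_right k hd))
  calc ((D / ε) ^ d) ^ k * k ≤ (D / ε) ^ (d * k) * 2 ^ (k * d) := by
        rw [← pow_mul]
        gcongr
        exact_mod_cast hk
    _ = (2 * D / ε) ^ (k * d) := by rw [mul_comm d k, ← mul_pow]; congr 1; ring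

theorem sqrt_mul_mul_le (hd : 0 < d) (hD : 1 ≤ D) :
    √(d * D * ε) ≤ (d : ℝ) ^ ((3 : ℝ) / 4) * D * √ε := by
  have hsqrt_d : √(d : ℝ) ≤ (d : ℝ) ^ ((3 : ℝ) / 4) := by
    rw [Real.sqrt_eq_rpow]
    exact Real.rpow_le_rpow_of_exponent_le (by exact_mod_cast hd) (by norm_num)
  have hsqrt_D : √D ≤ D := Real.sqrt_le_self_iff.2 (.inr hD)
  rw [Real.sqrt_mul (by positivity), Real.sqrt_mul (by positivity)]
  gcongr

theorem count_mul_pow_le_probBound (hd : 0 < d) (hm : 0 < m) (hD : 1 ≤ D) (hε : 0 < ε)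
    (hσ : 0 < σ) :
    ((D / ε) ^ d) ^ k * k * (k ^ m) ^ m * (2 / σ * (14 * n * √(d * D * ε))) ^ m
      ≤ probBound 28 n k d m D ε σ := by
  have hm₁ : (1 : ℝ) ≤ m := by exact_mod_cast hm
  have hfactor : 2 / σ * (14 * n * √(d * D * ε))
      ≤ 28 * (d : ℝ) ^ ((3 : ℝ) / 4) * D * n * m * √ε / σ :=
    calc 2 / σ * (14 * n * √(d * D * ε)) = 28 * n * √(d * D * ε) * 1 / σ := by ring
      _ ≤ 28 * n * ((d : ℝ) ^ ((3 : ℝ) / 4) * D * √ε) * m / σ := by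
          gcongr
          exact sqrt_mul_mul_le hd hD
      _ = 28 * (d : ℝ) ^ ((3 : ℝ) / 4) * D * n * m * √ε / σ := by ring
  calc _ ≤ (2 * D / ε) ^ (k * d) * (k ^ m) ^ m
          * (28 * (d : ℝ) ^ ((3 : ℝ) / 4) * D * n * m * √ε / σ) ^ m := by
        gcongr
        exact card_mul_pow_le_pow hd (by linarith) hε
    _ = probBound 28 n k d m D ε σ := by
        rw [probBound, mul_assoc, ← mul_pow]
        congr 2
        ring

theorem one_le_probBound_zero (c : ℝ) (n k d : ℕ) (σ : ℝ) (hεD : ε ≤ D) (hε : 0 < ε) :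
    1 ≤ probBound c n k d 0 D ε σ := by
  rw [probBound, pow_zero, mul_one]
  exact one_le_pow₀ ((one_le_div hε).2 (by linarith))

theorem one_le_probBound {c : ℝ} (hc : 1 ≤ c) (hk : 0 < k) (hd : 0 < d) (hm : 0 < m) (hD : 1 ≤ D)
    (hε : 0 < ε) (hε₁ : ε ≤ 1) (hnε : 1 ≤ n * ε) (hσ : 0 < σ) (hσ₁ : σ ≤ 1) :
    1 ≤ probBound c n k d m D ε σ := by
  have hm₁ : (1 : ℝ) ≤ m := by exact_mod_cast hm
  have hk₁ : (1 : ℝ) ≤ (k : ℝ) ^ m := one_le_pow₀ (by exact_mod_cast hk)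
  have hd₁ : (1 : ℝ) ≤ (d : ℝ) ^ ((3 : ℝ) / 4) :=
    Real.one_le_rpow (by exact_mod_cast hd) (by norm_num)
  have hn₁ : 1 ≤ n * √ε := hnε.trans (by gcongr; exact Real.le_sqrt_self_iff.2 hε₁)
  refine one_le_mul_of_one_le_of_one_le (one_le_pow₀ ?_) (one_le_pow₀ ?_)
  · exact (one_le_div hε).2 (by linarith)
  · rw [one_le_div hσ]
    calc σ ≤ 1 * 1 * 1 * 1 * 1 * 1 := by linarith
      _ ≤ c * (k : ℝ) ^ m * (d : ℝ) ^ ((3 : ℝ) / 4) * D * (n * √ε) * m := by gcongr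
      _ = c * (k : ℝ) ^ m * (d : ℝ) ^ ((3 : ℝ) / 4) * D * n * m * √ε := by ring

end Bound

section Cases

variable {n k d : ℕ}

theorem le_cubeD {M : ℕ} (hM : 0 < M) (h : M ≤ n * k * d) {r : ℝ}
    (hr : r ^ 2 ≤ 2 * n * Real.log M) : r ≤ cubeD n k d := by
  have hMR : (M : ℝ) ≤ (n : ℝ) * k * d := by exact_mod_cast h
  refine Real.le_sqrt_of_sq_le (hr.trans ?_)
  gcongr

theorem one_le_cubeD (h : 2 ≤ n * k * d) : 1 ≤ cubeD n k d := by
  have hn : (1 : ℝ) ≤ n := by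
    exact_mod_cast Nat.one_le_iff_ne_zero.2 fun h₀ => by simp [h₀] at h
  refine le_cubeD two_pos h ?_
  push_cast
  nlinarith [Real.log_two_gt_d9]

theorem two_le_cubeD (hn : 2 ≤ n) (hk : 2 ≤ k) (hd : 0 < d) : 2 ≤ cubeD n k d := by
  have hn₂ : (2 : ℝ) ≤ n := by exact_mod_cast hn
  have hlog : Real.log (4 : ℕ) = 2 * Real.log 2 := by
    rw [← Nat.cast_two, ← Real.log_pow]
    norm_num
  refine le_cubeD four_pos (Nat.mul_le_mul (Nat.mul_le_mul hn hk) hd) ?_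
  rw [hlog]
  nlinarith [Real.log_two_gt_d9]

theorem cubeD_eq_zero (h : n * k * d = 1) : cubeD n k d = 0 := by
  have hcast : (n : ℝ) * k * d = 1 := by exact_mod_cast h
  simp [cubeD, hcast]

theorem two_le_of_improvementEvent_nonempty {A : Finset (Fin n)} (hA : A.Nonempty)
    {sz : Fin k → ℕ} {π : Fin n → ℕ} {ε : ℝ} (h : (improvementEvent d A sz π ε).Nonempty) :
    2 ≤ n ∧ 2 ≤ k := by
  obtain ⟨a, ha⟩ := hA
  obtain ⟨ω, L, seq, hseq, -⟩ := h
  refine ⟨(hseq.two_le_card_source ha).trans (card_clusterIdx_le _ _), ?_⟩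
  have : Nontrivial (Fin k) := ⟨_, _, (hseq.firstMove_spec ha).2⟩
  exact Fin.nontrivial_iff_two_le.1 this

variable {Y : Fin n → Fin d → ℝ} {σ ε : ℝ}

theorem cond_perturbedPoints_le_probBound_zero (hn : 0 < n) (hk : 0 < k) (hd : 0 < d) (hσ : σ ≠ 0)
    (hε : 0 < ε) (hε₁ : ε ≤ 1) (c : ℝ) (E : Set (Fin n → Fin d → ℝ)) :
    (perturbedPoints n d Y σ)[|box n d (cubeD n k d / 2)] E
      ≤ ENNReal.ofReal (probBound c n k d 0 (cubeD n k d) ε σ) := by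
  have hnkd : 0 < n * k * d := by positivity
  obtain h₁ | h₂ : n * k * d = 1 ∨ 2 ≤ n * k * d := by omega
  · have hnull : (perturbedPoints n d Y σ)[|box n d (cubeD n k d / 2)] = 0 := by
      rw [cubeD_eq_zero h₁, zero_div]
      exact cond_eq_zero_of_meas_eq_zero (perturbedPoints_box_zero hn hd Y hσ)
    simp [hnull]
  · exact prob_le_one.trans (ENNReal.one_le_ofReal.2
      (one_le_probBound_zero c n k d σ (hε₁.trans (one_le_cubeD h₂)) hε))

theorem cond_perturbedPoints_improvementEvent_le_probBound {A : Finset (Fin n)} (hA : A.Nonempty)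
    (hd : 0 < d) {π : Fin n → ℕ} (hπ : Set.InjOn π A) (hY : ∀ i j, Y i j ∈ Set.Icc (0 : ℝ) 1)
    (hσ : 0 < σ) (hσ₁ : σ ≤ 1) (hε : 0 < ε) (hε₁ : ε ≤ 1) (sz : Fin k → ℕ) :
    (perturbedPoints n d Y σ)[|box n d (cubeD n k d / 2)] (improvementEvent d A sz π ε)
      ≤ ENNReal.ofReal (probBound 28 n k d A.card (cubeD n k d) ε σ) := by
  obtain hempty | hne := (improvementEvent d A sz π ε).eq_empty_or_nonempty
  · simp [hempty]
  obtain ⟨hn, hk⟩ := two_le_of_improvementEvent_nonempty hA hne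
  have hD : 2 ≤ cubeD n k d := two_le_cubeD hn hk hd
  have hD₁ : 1 ≤ cubeD n k d := by linarith
  obtain hsmall | hlarge := le_total (n * ε) 1
  · exact (cond_perturbedPoints_improvementEvent_le hd hA hπ hY hσ hσ₁ hD hε hsmall sz).trans
      (ENNReal.ofReal_le_ofReal (count_mul_pow_le_probBound hd hA.card_pos hD₁ hε hσ))
  · exact prob_le_one.trans (ENNReal.one_le_ofReal.2 (one_le_probBound (by norm_num)
      (by omega) hd hA.card_pos hD₁ hε hε₁ hlarge hσ hσ₁))

end Cases

end HartiganWong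

/-- Fix an active set `A` of point indices, starting cluster sizes `sz`, and
an order `π` (injective on `A`) in which the points of `A` first move. Let the random point
set `X` consist of `n` independent Gaussian perturbations (mean `0`, standard deviation
`σ ≤ 1`) of fixed points of `[0,1]^d`, conditioned on `X ⊆ [−D/2, D/2]^d` with
`D = √(2n·ln(nkd))`. Then the probability that some sequence of Hartigan--Wong iterations —
in which exactly the points of `A` move, the initial cluster sizes are given by `sz`, the
first moves occur in the order `π`, and every iteration strictly decreases `Φ` — improves the
potential by at most `ε ≤ 1` is bounded by
`(2D/ε)^{kd} · (c·k^{|A|}·d^{3/4}·D·n·|A|·√ε/σ)^{|A|}` for an absolute constant `c > 0`. -/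
theorem improving_sequence_fixed_active_set :
    ∃ c : ℝ, 0 < c ∧
      ∀ (n k d : ℕ), 0 < n → 0 < k → 0 < d →
        ∀ (A : Finset (Fin n)) (sz : Fin k → ℕ) (π : Fin n → ℕ), Set.InjOn π ↑A →
          ∀ (Y : Fin n → Fin d → ℝ), (∀ i j, Y i j ∈ Set.Icc (0 : ℝ) 1) →
            ∀ σ : ℝ, 0 < σ → σ ≤ 1 →
              ∀ ε : ℝ, 0 < ε → ε ≤ 1 →
                ProbabilityTheory.cond (perturbedPoints n d Y σ)
                    {ω | ∀ (i : Fin n) (j : Fin d),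
                        ω i j ∈ Set.Icc (-(cubeD n k d / 2)) (cubeD n k d / 2)}
                    {ω | ∃ (L : ℕ) (seq : ℕ → Fin n → Fin k),
                      (∀ t < L, SingleMove (seq t) (seq (t + 1)) ∧
                        kmeansPot (fun i => toEuc (ω i)) (seq (t + 1))
                          < kmeansPot (fun i => toEuc (ω i)) (seq t)) ∧
                      {x : Fin n | ∃ t < L, seq (t + 1) x ≠ seq t x} = ↑A ∧
                      (∀ i : Fin k, (clusterIdx (seq 0) i).card = sz i) ∧
                      (∀ a ∈ A, ∀ b ∈ A, π a < π b →
                        sInf {t : ℕ | t < L ∧ seq (t + 1) a ≠ seq t a}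
                          < sInf {t : ℕ | t < L ∧ seq (t + 1) b ≠ seq t b}) ∧
                      kmeansPot (fun i => toEuc (ω i)) (seq 0)
                          - kmeansPot (fun i => toEuc (ω i)) (seq L) ≤ ε}
                  ≤ ENNReal.ofReal
                      ((2 * cubeD n k d / ε) ^ (k * d) *
                        (c * (k : ℝ) ^ A.card * (d : ℝ) ^ ((3 : ℝ) / 4) * cubeD n k d
                            * n * A.card * Real.sqrt ε / σ) ^ A.card) := by
  refine ⟨28, by norm_num, ?_⟩
  intro n k d hn hk hd A sz π hπ Y hY σ hσ hσ₁ ε hε hε₁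
  refine (measure_mono (t := HartiganWong.improvementEvent d A sz π ε) ?_).trans ?_
  · rintro ω ⟨L, seq, hstep, hmoved, hcard, horder, himp⟩
    exact ⟨L, seq, ⟨hstep, hmoved, hcard, horder⟩, himp⟩
  obtain rfl | hA := A.eq_empty_or_nonempty
  · exact HartiganWong.cond_perturbedPoints_le_probBound_zero hn hk hd hσ.ne' hε hε₁ 28 _
  · exact HartiganWong.cond_perturbedPoints_improvementEvent_le_probBound hA hd hπ hY hσ hσ₁ hε hε₁
      sz
end

section
/- Let the random point set X consist of n points obtained by independent Gaussian perturbations (mean 0, standard deviation σ ≤ 1) of fixed points in [0,1]^d, conditioned on X ⊆ [−D/2, D/2]^d with D = √(2n ln(nkd)), and assume 4kd ≤ n. Let Δ_min denote the minimum total potential improvement over all sequences of Hartigan–Wong iterations (into k clusters) in which exactly 4kd distinct points switch clusters. Then for every ε ≤ 1, the probability that Δ_min ≤ ε is at most (c · k^{8kd+4} · d^{11} · D^5 · n^{8 + 1/d} · ε / σ^4)^{kd} for some absolute constant c > 0. -/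
open MeasureTheory ProbabilityTheory

/-!
Only the first moves of the `m = 4kd` points that switch clusters matter. Listed in the order of
these moves, the gain of the `s`-th one depends on the first `s` of these points, on the initial
cluster sums, and on finitely many combinatorial choices. Each gain is at most the total
improvement, and rounding the initial cluster sums to a grid of mesh `ε` changes it by `O(dDε)`.
For a fixed choice of combinatorial data and grid points, the `s`-th gain is quadratic in each
coordinate of the `s`-th point, with leading coefficient at least `1 / n`. Conditionally on the
other points it is therefore small with probability `O(√(dDεn) / σ)`, and integrating the points
out from last to first bounds the probability that all gains are small by the `m`-th power of this.
A union bound over the data and the grid then finishes the proof: the `(nD/ε)^{kd}` roundings cost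
less than the factor `ε^{2kd}` gained.
-/

section ProductMeasure

variable {ι : Type*} [Fintype ι] {α : ι → Type*} [∀ i, MeasurableSpace (α i)]
  (μ : ∀ i, Measure (α i)) [∀ i, IsProbabilityMeasure (μ i)]

theorem cond_pi_univ_pi {t : ∀ i, Set (α i)} (ht : ∀ i, MeasurableSet (t i))
    (hμt : ∀ i, μ i (t i) ≠ 0) :
    (Measure.pi μ)[|Set.univ.pi t] = Measure.pi fun i => (μ i)[|t i] := by
  have (i : ι) : IsProbabilityMeasure (μ i)[|t i] := cond_isProbabilityMeasure (hμt i)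
  refine (Measure.pi_eq fun s _ => ?_).symm
  rw [cond_apply (MeasurableSet.univ_pi ht), ← Set.pi_inter_distrib, Measure.pi_pi, Measure.pi_pi,
    ENNReal.prod_inv_distrib fun i _ j _ _ => Or.inl (hμt i), ← Finset.prod_mul_distrib]
  exact Finset.prod_congr rfl fun i _ => (cond_apply (ht i) _ _).symm

variable [DecidableEq ι]

theorem measure_pi_inter_le_mul {i : ι} {B C : Set (∀ i, α i)} {p : ENNReal}
    (hB : MeasurableSet B) (hC : MeasurableSet C)
    (hBp : ∀ ω, μ i {x | Function.update ω i x ∈ B} ≤ p)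
    (hCi : ∀ ω x, Function.update ω i x ∈ C ↔ ω ∈ C) :
    Measure.pi μ (C ∩ B) ≤ p * Measure.pi μ C := by
  have hCB := hC.inter hB
  rw [← lintegral_indicator_one hCB, ← lintegral_indicator_one hC,
    ← lintegral_const_mul _ (measurable_one.indicator hC)]
  refine lintegral_le_of_lmarginal_le {i} (measurable_one.indicator hCB)
    ((measurable_one.indicator hC).const_mul p) fun ω => ?_
  rw [lmarginal_singleton, lmarginal_singleton]
  by_cases hω : ω ∈ C
  · have hfiber (x : α i) : (C ∩ B).indicator (1 : (∀ i, α i) → ENNReal) (Function.update ω i x)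
        = {x | Function.update ω i x ∈ B}.indicator 1 x :=
      Set.indicator_eq_indicator (and_iff_right ((hCi ω x).2 hω)) rfl
    have hfiberB : MeasurableSet {x | Function.update ω i x ∈ B} :=
      hB.preimage (measurable_update ω)
    simp only [hfiber, lintegral_indicator_one hfiberB]
    simpa [Set.indicator, hCi, hω] using hBp ω
  · simp [Set.indicator, hCi, hω]

theorem measure_pi_le_of_forall_update {i : ι} {B : Set (∀ i, α i)} {p : ENNReal}
    (hB : MeasurableSet B) (hBp : ∀ ω, μ i {x | Function.update ω i x ∈ B} ≤ p) :
    Measure.pi μ B ≤ p := by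
  simpa using measure_pi_inter_le_mul μ hB MeasurableSet.univ hBp (by simp)

theorem measure_pi_iInter_le_pow {m : ℕ} {p : ENNReal} (e : Fin m → ι)
    {B : Fin m → Set (∀ i, α i)} (hB : ∀ s, MeasurableSet (B s))
    (hBp : ∀ s ω, μ (e s) {x | Function.update ω (e s) x ∈ B s} ≤ p)
    (hBe : ∀ s r, s < r → ∀ ω x, Function.update ω (e r) x ∈ B s ↔ ω ∈ B s) :
    Measure.pi μ (⋂ s, B s) ≤ p ^ m := by
  induction m with
  | zero => simp
  | succ m ih =>
    have hprefix : Measure.pi μ (⋂ s : Fin m, B s.castSucc) ≤ p ^ m :=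
      ih (fun s => e s.castSucc) (fun s => hB _) (fun s => hBp _)
        fun s r hsr => hBe _ _ (Fin.castSucc_lt_castSucc_iff.2 hsr)
    have hsplit : ⋂ s, B s = (⋂ s : Fin m, B s.castSucc) ∩ B (Fin.last m) := by
      ext ω
      simp only [Set.mem_iInter, Set.mem_inter_iff]
      exact Fin.forall_fin_succ'
    have hlast (ω : ∀ i, α i) (x : α (e (Fin.last m))) :
        Function.update ω (e (Fin.last m)) x ∈ ⋂ s : Fin m, B s.castSucc ↔
          ω ∈ ⋂ s : Fin m, B s.castSucc := by
      simp only [Set.mem_iInter]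
      exact forall_congr' fun s => hBe _ _ (Fin.castSucc_lt_last s) ω x
    calc Measure.pi μ (⋂ s, B s)
        = Measure.pi μ ((⋂ s : Fin m, B s.castSucc) ∩ B (Fin.last m)) := by rw [hsplit]
      _ ≤ p * Measure.pi μ (⋂ s : Fin m, B s.castSucc) :=
          measure_pi_inter_le_mul μ (hB _) (.iInter fun s => hB _) (hBp _) hlast
      _ ≤ p ^ (m + 1) := by rw [pow_succ']; gcongr

end ProductMeasure

theorem measure_le_card_mul_of_forall_exists {Ω δ : Type*} [MeasurableSpace Ω] [Fintype δ]
    (μ : Measure Ω) {A : Set Ω} {P : δ → Prop} {B : δ → Set Ω} {q : ENNReal}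
    (hA : ∀ ω ∈ A, ∃ i, P i ∧ ω ∈ B i) (hB : ∀ i, P i → μ (B i) ≤ q) :
    μ A ≤ Fintype.card δ * q := by
  classical
  calc μ A ≤ μ (⋃ i ∈ Finset.univ.filter P, B i) :=
        measure_mono fun ω hω => by simpa using hA ω hω
    _ ≤ ∑ i with P i, μ (B i) := measure_biUnion_finset_le _ _
    _ ≤ (Finset.univ.filter P).card • q :=
        Finset.sum_le_card_nsmul _ _ _ fun i hi => hB i (Finset.mem_filter.1 hi).2
    _ ≤ Fintype.card δ * q := by
        rw [nsmul_eq_mul]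
        gcongr
        exact Finset.card_le_univ _

theorem cond_le_two_mul_smul {Ω : Type*} [MeasurableSpace Ω] {μ ν : Measure Ω} {t : Set Ω}
    {c : ENNReal} (hμ : μ ≤ c • ν) (ht : 2⁻¹ ≤ μ t) : μ[|t] ≤ (2 * c) • ν := by
  refine Measure.le_iff.2 fun s hs => ?_
  calc μ[|t] s ≤ (μ t)⁻¹ * μ s := by
        rw [cond_apply' hs]
        gcongr
        exact Set.inter_subset_right
    _ ≤ 2 * (c * ν s) := by
        gcongr
        · exact ENNReal.inv_le_iff_inv_le.1 ht
        · exact hμ s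
    _ = ((2 * c) • ν) s := by rw [Measure.smul_apply, smul_eq_mul, mul_assoc]

theorem volume_le_of_abs_quadratic_le_of_one_side {a p q κ : ℝ} (ha : 0 < a) {s : Set ℝ}
    (hs : ∀ y ∈ s, |a * y ^ 2 + p * y + q| ≤ κ)
    (hside : ∀ y ∈ s, ∀ z ∈ s, 0 ≤ (2 * a * y + p) * (2 * a * z + p)) :
    volume s ≤ ENNReal.ofReal √(2 * κ / a) := by
  refine (Real.volume_le_diam s).trans (Metric.ediam_le fun y hy z hz => ?_)
  rw [edist_dist, Real.dist_eq]
  refine ENNReal.ofReal_le_ofReal (Real.le_sqrt_of_sq_le ?_)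
  have hvertex : |a * (y - z)| ≤ |a * (y + z) + p| :=
    sq_le_sq.1 (by nlinarith [hside y hy z hz])
  rw [le_div_iff₀ ha, sq_abs]
  calc (y - z) ^ 2 * a = |y - z| * |a * (y - z)| := by
        rw [← abs_mul, abs_of_nonneg] <;> nlinarith [mul_nonneg ha.le (sq_nonneg (y - z))]
    _ ≤ |y - z| * |a * (y + z) + p| := by gcongr
    _ = |(a * y ^ 2 + p * y + q) - (a * z ^ 2 + p * z + q)| := by rw [← abs_mul]; ring_nf
    _ ≤ 2 * κ := (abs_sub _ _).trans (by linarith [hs y hy, hs z hz])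

theorem volume_abs_quadratic_le {a : ℝ} (ha : 0 < a) (p q κ : ℝ) :
    volume {y : ℝ | |a * y ^ 2 + p * y + q| ≤ κ} ≤ ENNReal.ofReal (2 * √(2 * κ / a)) := by
  set S : Set ℝ := {y | |a * y ^ 2 + p * y + q| ≤ κ}
  calc volume S ≤ volume (S ∩ {y | 0 ≤ 2 * a * y + p} ∪ S ∩ {y | 2 * a * y + p ≤ 0}) :=
        measure_mono fun y hy => (le_total 0 (2 * a * y + p)).imp (⟨hy, ·⟩) (⟨hy, ·⟩)
    _ ≤ ENNReal.ofReal √(2 * κ / a) + ENNReal.ofReal √(2 * κ / a) :=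
        (measure_union_le _ _).trans <| add_le_add
          (volume_le_of_abs_quadratic_le_of_one_side ha (fun _ hy => hy.1)
            fun _ hy _ hz => mul_nonneg hy.2 hz.2)
          (volume_le_of_abs_quadratic_le_of_one_side ha (fun _ hy => hy.1)
            fun _ hy _ hz => mul_nonneg_of_nonpos_of_nonpos hy.2 hz.2)
    _ = ENNReal.ofReal (2 * √(2 * κ / a)) := by
        rw [← ENNReal.ofReal_add (Real.sqrt_nonneg _) (Real.sqrt_nonneg _), two_mul √_]

section TruncatedGaussian

theorem gaussianReal_le_smul_volume (y : ℝ) {v : NNReal} (hv : v ≠ 0) :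
    gaussianReal y v ≤ ENNReal.ofReal (√(2 * Real.pi * v))⁻¹ • volume := by
  rw [gaussianReal_of_var_ne_zero _ hv, ← withDensity_const]
  refine withDensity_mono (ae_of_all _ fun x => ENNReal.ofReal_le_ofReal ?_)
  refine mul_le_of_le_one_right (by positivity) (Real.exp_le_one_iff.2 ?_)
  exact div_nonpos_of_nonpos_of_nonneg (neg_nonpos.2 (sq_nonneg _)) (by positivity)

theorem inv_two_le_gaussianReal_ball (y : ℝ) {v : NNReal} {r : ℝ} (hr : 0 < r)
    (hv : 2 * v ≤ r ^ 2) : 2⁻¹ ≤ gaussianReal y v (Metric.ball y r) := by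
  have hchebyshev : gaussianReal y v (Metric.ball y r)ᶜ ≤ 2⁻¹ := by
    calc gaussianReal y v (Metric.ball y r)ᶜ
        = gaussianReal y v {x | r ≤ |id x - (gaussianReal y v)[id]|} := by
          congr 1
          ext x
          simp [Real.dist_eq]
      _ ≤ ENNReal.ofReal (Var[id; gaussianReal y v] / r ^ 2) :=
          meas_ge_le_variance_div_sq (by exact_mod_cast memLp_id_gaussianReal 2) hr
      _ ≤ ENNReal.ofReal 2⁻¹ := by
          rw [variance_id_gaussianReal]
          refine ENNReal.ofReal_le_ofReal ((div_le_iff₀ (by positivity)).2 ?_)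
          linarith
      _ = 2⁻¹ := by rw [ENNReal.ofReal_inv_of_pos two_pos, ENNReal.ofReal_ofNat]
  rw [prob_compl_eq_one_sub measurableSet_ball, tsub_le_iff_right] at hchebyshev
  refine (ENNReal.add_le_add_iff_left (a := 2⁻¹) (by simp)).1 ?_
  rwa [ENNReal.inv_two_add_inv_two]

variable {y σ D : ℝ}

theorem inv_two_le_gaussianReal_Icc (hy : y ∈ Set.Icc (0 : ℝ) 1) (hσ : 0 < σ) (hσ1 : σ ≤ 1)
    (hD : 6 ≤ D) :
    2⁻¹ ≤ gaussianReal y (σ ^ 2).toNNReal (Set.Icc (-(D / 2)) (D / 2)) := by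
  have hvar : 2 * ((σ ^ 2).toNNReal : ℝ) ≤ 2 ^ 2 := by
    rw [Real.coe_toNNReal _ (sq_nonneg σ)]
    nlinarith
  refine (inv_two_le_gaussianReal_ball y two_pos hvar).trans (measure_mono fun x hx => ?_)
  have hx := abs_lt.1 (Real.dist_eq x y ▸ Metric.mem_ball.1 hx)
  constructor <;> linarith [hy.1, hy.2]

theorem gaussianReal_Icc_ne_zero (hy : y ∈ Set.Icc (0 : ℝ) 1) (hσ : 0 < σ) (hσ1 : σ ≤ 1)
    (hD : 6 ≤ D) : gaussianReal y (σ ^ 2).toNNReal (Set.Icc (-(D / 2)) (D / 2)) ≠ 0 :=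
  ((ENNReal.inv_pos.2 ENNReal.ofNat_ne_top).trans_le
    (inv_two_le_gaussianReal_Icc hy hσ hσ1 hD)).ne'

theorem cond_gaussianReal_Icc_le_smul_volume (hy : y ∈ Set.Icc (0 : ℝ) 1) (hσ : 0 < σ)
    (hσ1 : σ ≤ 1) (hD : 6 ≤ D) :
    (gaussianReal y (σ ^ 2).toNNReal)[|Set.Icc (-(D / 2)) (D / 2)]
      ≤ ENNReal.ofReal (1 / σ) • volume := by
  have hdensity : gaussianReal y (σ ^ 2).toNNReal ≤ ENNReal.ofReal (2 * σ)⁻¹ • volume := by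
    refine (gaussianReal_le_smul_volume y (by simp [hσ.ne'])).trans ?_
    gcongr
    refine Real.le_sqrt_of_sq_le ?_
    rw [Real.coe_toNNReal _ (sq_nonneg σ)]
    nlinarith [Real.pi_gt_three, sq_nonneg σ]
  convert cond_le_two_mul_smul hdensity (inv_two_le_gaussianReal_Icc hy hσ hσ1 hD) using 2
  rw [← ENNReal.ofReal_ofNat 2, ← ENNReal.ofReal_mul zero_le_two]
  congr 1
  field_simp

theorem cond_perturbedPoints_cube {n d : ℕ} {Y : Fin n → Fin d → ℝ}
    (hY : ∀ i j, Y i j ∈ Set.Icc (0 : ℝ) 1) (hσ : 0 < σ) (hσ1 : σ ≤ 1) (hD : 6 ≤ D) :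
    (perturbedPoints n d Y σ)[|{ω | ∀ i j, ω i j ∈ Set.Icc (-(D / 2)) (D / 2)}]
      = Measure.pi fun i => Measure.pi fun j =>
          (gaussianReal (Y i j) (σ ^ 2).toNNReal)[|Set.Icc (-(D / 2)) (D / 2)] := by
  have hcube : {ω : Fin n → Fin d → ℝ | ∀ i j, ω i j ∈ Set.Icc (-(D / 2)) (D / 2)}
      = Set.univ.pi fun _ => Set.univ.pi fun _ => Set.Icc (-(D / 2)) (D / 2) := by
    ext ω
    simp only [Set.mem_pi, Set.mem_univ, true_implies, Set.mem_ofPred_eq]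
  have hpos (i : Fin n) (j : Fin d) := gaussianReal_Icc_ne_zero (hY i j) hσ hσ1 hD
  rw [hcube, perturbedPoints, cond_pi_univ_pi _ fun _ => .univ_pi fun _ => measurableSet_Icc]
  · congr with i : 1
    exact cond_pi_univ_pi _ (fun _ => measurableSet_Icc) (hpos i)
  · intro i
    rw [Measure.pi_pi]
    exact Finset.prod_ne_zero_iff.2 fun j _ => hpos i j

end TruncatedGaussian

section Potential

variable {ι E : Type*} [NormedAddCommGroup E]

theorem sum_norm_sub_mean_sq [InnerProductSpace ℝ E] (C : Finset ι) (X : ι → E) :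
    ∑ j ∈ C, ‖X j - (C.card : ℝ)⁻¹ • ∑ i ∈ C, X i‖ ^ 2
      = ∑ j ∈ C, ‖X j‖ ^ 2 - (C.card : ℝ)⁻¹ * ‖∑ j ∈ C, X j‖ ^ 2 := by
  obtain rfl | hC := C.eq_empty_or_nonempty
  · simp
  have hcard : (C.card : ℝ) ≠ 0 := by exact_mod_cast hC.card_ne_zero
  simp only [norm_sub_sq_real, Finset.sum_add_distrib, Finset.sum_sub_distrib, ← Finset.mul_sum,
    ← sum_inner, inner_smul_right, real_inner_self_eq_norm_sq, norm_smul, mul_pow,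
    Finset.sum_const, nsmul_eq_mul, norm_inv, Real.norm_natCast]
  field_simp
  ring

/-- The term `|C| ‖cm(C)‖²` by which a cluster `C` of `X` lowers the potential below `∑ ‖X j‖²`,
with the sum of the points of `C` displaced by `u`. -/
noncomputable def clusterEnergy (X : ι → E) (C : Finset ι) (u : E) : ℝ :=
  (C.card : ℝ)⁻¹ * ‖∑ j ∈ C, X j + u‖ ^ 2

theorem abs_clusterEnergy_sub_le {X : ι → E} {R η : ℝ} (hR : 0 ≤ R) (hX : ∀ j, ‖X j‖ ≤ R)
    (C : Finset ι) {u : E} (hu : ‖u‖ ≤ η) :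
    |clusterEnergy X C u - clusterEnergy X C 0| ≤ η * (2 * R + η) := by
  have hη : 0 ≤ η := (norm_nonneg u).trans hu
  obtain rfl | hC := C.eq_empty_or_nonempty
  · simp only [clusterEnergy, Finset.card_empty, Nat.cast_zero, inv_zero, zero_mul, sub_self,
      abs_zero]
    positivity
  have hcard : (1 : ℝ) ≤ C.card := by exact_mod_cast hC.card_pos
  set S := ∑ j ∈ C, X j
  have hS : ‖S‖ ≤ C.card * R := (norm_sum_le_of_le C fun j _ => hX j).trans_eq (by simp)
  rw [clusterEnergy, clusterEnergy, add_zero, ← mul_sub, abs_mul, abs_of_nonneg (by positivity),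
    inv_mul_le_iff₀ (by positivity)]
  calc |‖S + u‖ ^ 2 - ‖S‖ ^ 2| = |‖S + u‖ - ‖S‖| * (‖S + u‖ + ‖S‖) := by
        rw [sq_sub_sq, abs_mul, abs_of_nonneg (by positivity : 0 ≤ ‖S + u‖ + ‖S‖), mul_comm]
    _ ≤ η * (C.card * R + η + C.card * R) := by
        gcongr
        · exact (abs_norm_sub_norm_le _ _).trans (by simpa using hu)
        · exact (norm_add_le _ _).trans (add_le_add hS hu)
    _ ≤ C.card * (η * (2 * R + η)) := by nlinarith [mul_nonneg hη hη]

/-- The decrease of the potential when a point `x` moves from a cluster of size `M` and sum `S` to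
one of size `N` and sum `T`. All arguments are free, since the sums are only known up to
rounding. The junk value `0⁻¹ = 0` gives an empty cluster the potential `0`. -/
noncomputable def moveGain (M N : ℝ) (S T x : E) : ℝ :=
  (M - 1)⁻¹ * ‖S - x‖ ^ 2 + (N + 1)⁻¹ * ‖T + x‖ ^ 2 - M⁻¹ * ‖S‖ ^ 2 - N⁻¹ * ‖T‖ ^ 2

theorem moveGain_add_smul_eq_quadratic [InnerProductSpace ℝ E] (M N : ℝ) (S T x : E) {v : E}
    (hv : ‖v‖ = 1) :
    ∃ p q : ℝ, ∀ y : ℝ,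
      moveGain M N S T (x + y • v) = ((M - 1)⁻¹ + (N + 1)⁻¹) * y ^ 2 + p * y + q := by
  refine ⟨-2 * (M - 1)⁻¹ * inner ℝ (S - x) v + 2 * (N + 1)⁻¹ * inner ℝ (T + x) v,
    moveGain M N S T x, fun y => ?_⟩
  have hsub : ‖S - (x + y • v)‖ ^ 2 = ‖S - x‖ ^ 2 - 2 * y * inner ℝ (S - x) v + y ^ 2 := by
    rw [← sub_sub, norm_sub_sq_real, inner_smul_right, norm_smul, hv, mul_one, Real.norm_eq_abs,
      sq_abs, mul_assoc]
  have hadd : ‖T + (x + y • v)‖ ^ 2 = ‖T + x‖ ^ 2 + 2 * y * inner ℝ (T + x) v + y ^ 2 := by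
    rw [← add_assoc, norm_add_sq_real, inner_smul_right, norm_smul, hv, mul_one, Real.norm_eq_abs,
      sq_abs, mul_assoc]
  rw [moveGain, moveGain, hsub, hadd]
  ring

theorem moveGain_card_sum_add [DecidableEq ι] (X : ι → E) {C C' : Finset ι} {x : ι} (hx : x ∈ C)
    (hx' : x ∉ C') (u v : E) :
    moveGain C.card C'.card (∑ j ∈ C, X j + u) (∑ j ∈ C', X j + v) (X x)
      = clusterEnergy X (C.erase x) u + clusterEnergy X (insert x C') v
        - clusterEnergy X C u - clusterEnergy X C' v := by
  have hsource : ∑ j ∈ C, X j + u - X x = ∑ j ∈ C.erase x, X j + u := by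
    rw [← Finset.sum_erase_add C X hx]
    abel
  have htarget : ∑ j ∈ C', X j + v + X x = ∑ j ∈ insert x C', X j + v := by
    rw [Finset.sum_insert hx']
    abel
  rw [moveGain, hsource, htarget, ← Finset.cast_card_erase_of_mem hx, ← Nat.cast_add_one,
    ← Finset.card_insert_of_notMem hx']
  rfl

theorem abs_moveGain_sub_moveGain_le {X : ι → E} {R η : ℝ} (hR : 0 ≤ R) (hX : ∀ j, ‖X j‖ ≤ R)
    {C C' : Finset ι} {x : ι} (hx : x ∈ C) (hx' : x ∉ C') {S T : E}
    (hS : ‖S - ∑ j ∈ C, X j‖ ≤ η) (hT : ‖T - ∑ j ∈ C', X j‖ ≤ η) :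
    |moveGain C.card C'.card S T (X x)
        - moveGain C.card C'.card (∑ j ∈ C, X j) (∑ j ∈ C', X j) (X x)|
      ≤ 4 * (η * (2 * R + η)) := by
  classical
  have hexact := moveGain_card_sum_add X hx hx' 0 0
  have hshifted := moveGain_card_sum_add X hx hx' (S - ∑ j ∈ C, X j) (T - ∑ j ∈ C', X j)
  rw [add_zero, add_zero] at hexact
  rw [add_sub_cancel, add_sub_cancel] at hshifted
  rw [hexact, hshifted, abs_le]
  have herase := abs_le.1 (abs_clusterEnergy_sub_le hR hX (C.erase x) hS)
  have hinsert := abs_le.1 (abs_clusterEnergy_sub_le hR hX (insert x C') hT)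
  have hsource := abs_le.1 (abs_clusterEnergy_sub_le hR hX C hS)
  have htarget := abs_le.1 (abs_clusterEnergy_sub_le hR hX C' hT)
  constructor <;> linarith [herase.1, herase.2, hinsert.1, hinsert.2, hsource.1, hsource.2,
    htarget.1, htarget.2]

end Potential

section Clustering

variable {n k d : ℕ}

theorem mem_clusterIdx {cl : Fin n → Fin k} {i : Fin k} {j : Fin n} :
    j ∈ clusterIdx cl i ↔ cl j = i := by
  simp [clusterIdx]

theorem clusterIdx_update_source {cl : Fin n → Fin k} {x : Fin n} {i : Fin k} (hi : i ≠ cl x) :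
    clusterIdx (Function.update cl x i) (cl x) = (clusterIdx cl (cl x)).erase x := by
  ext y
  by_cases hy : y = x <;> simp [mem_clusterIdx, hy, hi]

theorem clusterIdx_update_target (cl : Fin n → Fin k) (x : Fin n) (i : Fin k) :
    clusterIdx (Function.update cl x i) i = insert x (clusterIdx cl i) := by
  ext y
  by_cases hy : y = x <;> simp [mem_clusterIdx, hy]

theorem clusterIdx_update_other {cl : Fin n → Fin k} {x : Fin n} {i l : Fin k} (hli : l ≠ i)
    (hlx : l ≠ cl x) : clusterIdx (Function.update cl x i) l = clusterIdx cl l := by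
  ext y
  by_cases hy : y = x <;> simp [mem_clusterIdx, hy, hli.symm, hlx.symm]

theorem kmeansPot_eq_sub_sum_clusterEnergy (X : Fin n → EuclideanSpace ℝ (Fin d))
    (cl : Fin n → Fin k) :
    kmeansPot X cl = ∑ j, ‖X j‖ ^ 2 - ∑ i, clusterEnergy X (clusterIdx cl i) 0 := by
  simp only [kmeansPot, clusterCtr, sum_norm_sub_mean_sq, Finset.sum_sub_distrib, clusterEnergy,
    add_zero]
  congr 1
  exact Finset.sum_fiberwise _ _ _

theorem kmeansPot_sub_kmeansPot_update (X : Fin n → EuclideanSpace ℝ (Fin d))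
    {cl : Fin n → Fin k} {x : Fin n} {i : Fin k} (hi : i ≠ cl x) :
    kmeansPot X cl - kmeansPot X (Function.update cl x i)
      = moveGain (clusterIdx cl (cl x)).card (clusterIdx cl i).card
          (∑ j ∈ clusterIdx cl (cl x), X j) (∑ j ∈ clusterIdx cl i, X j) (X x) := by
  have hgain := moveGain_card_sum_add X (mem_clusterIdx.2 rfl : x ∈ clusterIdx cl (cl x))
    (fun h => hi (mem_clusterIdx.1 h).symm : x ∉ clusterIdx cl i) 0 0
  rw [add_zero, add_zero, ← clusterIdx_update_source hi, ← clusterIdx_update_target] at hgain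
  have hsum : ∑ l, (clusterEnergy X (clusterIdx (Function.update cl x i) l) 0
        - clusterEnergy X (clusterIdx cl l) 0)
      = ∑ l ∈ {cl x, i}, (clusterEnergy X (clusterIdx (Function.update cl x i) l) 0
        - clusterEnergy X (clusterIdx cl l) 0) := by
    refine (Finset.sum_subset (Finset.subset_univ _) fun l _ hl => ?_).symm
    simp only [Finset.mem_insert, Finset.mem_singleton, not_or] at hl
    rw [clusterIdx_update_other hl.2 hl.1, sub_self]
  rw [Finset.sum_pair hi.symm, Finset.sum_sub_distrib] at hsum
  rw [kmeansPot_eq_sub_sum_clusterEnergy, kmeansPot_eq_sub_sum_clusterEnergy, hgain]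
  linarith

theorem sum_clusterIdx_eq_sum_add_sum_sub {ρ V : Type*} [Fintype ρ] [AddCommGroup V]
    {e : ρ → Fin n} (he : Function.Injective e) {cl cl₀ : Fin n → Fin k}
    (hcl : ∀ x ∉ Set.range e, cl x = cl₀ x) (f : Fin n → V) (i : Fin k) :
    ∑ j ∈ clusterIdx cl i, f j = ∑ j ∈ clusterIdx cl₀ i, f j
      + ∑ r, ((if cl (e r) = i then f (e r) else 0) - if cl₀ (e r) = i then f (e r) else 0) := by
  rw [clusterIdx, clusterIdx, Finset.sum_filter, Finset.sum_filter, ← sub_eq_iff_eq_add',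
    ← Finset.sum_sub_distrib]
  refine (Fintype.sum_of_injective e he _ _ (fun x hx => ?_) fun _ => rfl).symm
  rw [hcl x hx, sub_self]

end Clustering

section FirstCoordinate

variable {d : ℕ}

theorem continuous_toEuc : Continuous (toEuc (d := d)) :=
  PiLp.continuous_toLp 2 _

theorem toEuc_update (x : Fin d → ℝ) (c : Fin d) (y : ℝ) :
    toEuc (Function.update x c y)
      = toEuc (Function.update x c 0) + y • EuclideanSpace.single c (1 : ℝ) := by
  ext j
  obtain rfl | hj := eq_or_ne j c
  · simp [toEuc]
  · simp [toEuc, hj]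

theorem measure_pi_abs_moveGain_le {ν : Fin d → Measure ℝ} [∀ j, IsProbabilityMeasure (ν j)]
    {K : ENNReal} {c : Fin d} (hν : ν c ≤ K • volume) {a M N : ℝ} (ha : 0 < a)
    (haMN : a ≤ (M - 1)⁻¹ + (N + 1)⁻¹) (S T : EuclideanSpace ℝ (Fin d)) {κ : ℝ} (hκ : 0 ≤ κ) :
    Measure.pi ν {x | |moveGain M N S T (toEuc x)| ≤ κ}
      ≤ K * ENNReal.ofReal (2 * √(2 * κ / a)) := by
  have hcont : Continuous fun x => |moveGain M N S T (toEuc x)| := by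
    have := continuous_toEuc (d := d)
    unfold moveGain
    fun_prop
  refine measure_pi_le_of_forall_update ν (i := c)
    (isClosed_le hcont continuous_const).measurableSet fun x => ?_
  obtain ⟨p, q, hpq⟩ := moveGain_add_smul_eq_quadratic M N S T
    (toEuc (Function.update x c 0)) (v := EuclideanSpace.single c (1 : ℝ)) (by simp)
  have hquadratic (y : ℝ) : moveGain M N S T (toEuc (Function.update x c y))
      = ((M - 1)⁻¹ + (N + 1)⁻¹) * y ^ 2 + p * y + q := by
    rw [toEuc_update, hpq]
  simp only [Set.mem_ofPred_eq, hquadratic]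
  calc ν c {y | |((M - 1)⁻¹ + (N + 1)⁻¹) * y ^ 2 + p * y + q| ≤ κ}
      ≤ K * volume {y | |((M - 1)⁻¹ + (N + 1)⁻¹) * y ^ 2 + p * y + q| ≤ κ} := hν _
    _ ≤ K * ENNReal.ofReal (2 * √(2 * κ / ((M - 1)⁻¹ + (N + 1)⁻¹))) := by
        gcongr
        exact volume_abs_quadratic_le (ha.trans_le haMN) p q κ
    _ ≤ K * ENNReal.ofReal (2 * √(2 * κ / a)) := by gcongr

end FirstCoordinate

/-- A record of the first moves of the `m` points that change cluster in a run. With the sums of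
the initial clusters it determines the gain of each of these moves. -/
structure FirstMoves (n k m : ℕ) where
  /-- The points that change cluster, in the order of their first moves. -/
  point : Fin m → Fin n
  /-- The cluster that the `s`-th point leaves on its first move, which is its initial cluster. -/
  source : Fin m → Fin k
  /-- The cluster that the `s`-th point enters on its first move. -/
  target : Fin m → Fin k
  /-- The cluster of the `r`-th point, `r < s`, just before the first move of the `s`-th one. -/
  label : (s : Fin m) → Set.Iio s → Fin k
  /-- The sizes of the initial clusters. -/
  initSize : Fin k → Fin (n + 1)

namespace FirstMoves

variable {n k m : ℕ}

/-- The encoding of the records as tuples of functions, for counting them. -/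
def equivProd : FirstMoves n k m ≃ (Fin m → Fin n) × (Fin m → Fin k) × (Fin m → Fin k) ×
    ((s : Fin m) → Set.Iio s → Fin k) × (Fin k → Fin (n + 1)) where
  toFun R := (R.point, R.source, R.target, R.label, R.initSize)
  invFun p := ⟨p.1, p.2.1, p.2.2.1, p.2.2.2.1, p.2.2.2.2⟩

instance : Fintype (FirstMoves n k m) := Fintype.ofEquiv _ equivProd.symm

theorem card_eq : Fintype.card (FirstMoves n k m)
    = n ^ m * (k ^ m * (k ^ m * (k ^ (∑ s ∈ Finset.range m, s) * (n + 1) ^ k))) := by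
  rw [Fintype.card_congr equivProd]
  simp [Finset.prod_pow_eq_pow_sum, Finset.sum_range]

/-- The sum of `X` over cluster `i` just before the `s`-th first move, given the sums `U` of `X`
over the initial clusters: only the points that have already moved can have changed cluster. -/
def sumBefore {V : Type*} [AddCommGroup V] (R : FirstMoves n k m) (U : Fin k → V) (X : Fin n → V)
    (s : Fin m) (i : Fin k) : V :=
  U i + ∑ r : Set.Iio s, ((if R.label s r = i then X (R.point r) else 0)
    - if R.source r = i then X (R.point r) else 0)

/-- The size of cluster `i` just before the `s`-th first move. -/
noncomputable def size (R : FirstMoves n k m) (s : Fin m) (i : Fin k) : ℝ :=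
  R.sumBefore (fun i => (R.initSize i : ℝ)) (fun _ => 1) s i

/-- The gain of the `s`-th first move when `U` are the sums of `X` over the initial clusters. -/
noncomputable def gain {E : Type*} [NormedAddCommGroup E] (R : FirstMoves n k m) (U : Fin k → E)
    (X : Fin n → E) (s : Fin m) : ℝ :=
  moveGain (R.size s (R.source s)) (R.size s (R.target s)) (R.sumBefore U X s (R.source s))
    (R.sumBefore U X s (R.target s)) (X (R.point s))

/-- The properties of the records of actual runs that the probability estimate needs. The second
one bounds from below the leading coefficient of the gain as a quadratic in a coordinate of
the moving point. -/
structure Admissible (R : FirstMoves n k m) : Prop where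
  point_injective : Function.Injective R.point
  inv_le (s : Fin m) :
    (n : ℝ)⁻¹ ≤ (R.size s (R.source s) - 1)⁻¹ + (R.size s (R.target s) + 1)⁻¹

section Update

variable {R : FirstMoves n k m}

theorem sumBefore_update_point {V : Type*} [AddCommGroup V]
    (hR : Function.Injective R.point) {s q : Fin m} (hsq : s ≤ q) (U : Fin k → V)
    (X : Fin n → V) (x : V) (i : Fin k) :
    R.sumBefore U (Function.update X (R.point q) x) s i = R.sumBefore U X s i := by
  have hne (r : Set.Iio s) : R.point r ≠ R.point q := hR.ne (r.2.trans_le hsq).ne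
  simp only [sumBefore, Function.update_of_ne (hne _)]

variable {E : Type*} [NormedAddCommGroup E]

theorem gain_update_point_of_lt (hR : Function.Injective R.point) {s q : Fin m} (hsq : s < q)
    (U : Fin k → E) (X : Fin n → E) (x : E) :
    R.gain U (Function.update X (R.point q) x) s = R.gain U X s := by
  simp only [gain, sumBefore_update_point hR hsq.le, Function.update_of_ne (hR.ne hsq.ne)]

theorem gain_update_point_self (hR : Function.Injective R.point) (U : Fin k → E) (X : Fin n → E)
    (s : Fin m) (x : E) :
    R.gain U (Function.update X (R.point s) x) s
      = moveGain (R.size s (R.source s)) (R.size s (R.target s)) (R.sumBefore U X s (R.source s))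
          (R.sumBefore U X s (R.target s)) x := by
  simp only [gain, sumBefore_update_point hR le_rfl, Function.update_self]

end Update

theorem continuous_gain {E : Type*} [NormedAddCommGroup E] (R : FirstMoves n k m) (U : Fin k → E)
    (s : Fin m) : Continuous fun X : Fin n → E => R.gain U X s := by
  have hsum (i : Fin k) : Continuous fun X : Fin n → E => R.sumBefore U X s i := by
    refine continuous_const.add (continuous_finsetSum _ fun r _ => .sub ?_ ?_) <;> split_ifs <;>
      fun_prop
  unfold gain moveGain
  fun_prop

theorem measure_pi_abs_gain_le {d : ℕ} {ρ : Fin n → Fin d → Measure ℝ}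
    [∀ i j, IsProbabilityMeasure (ρ i j)] {K : ENNReal} {c : Fin d}
    (hρ : ∀ i, ρ i c ≤ K • volume) {R : FirstMoves n k m} (hR : R.Admissible)
    (U : Fin k → EuclideanSpace ℝ (Fin d)) {κ : ℝ} (hκ : 0 ≤ κ) :
    Measure.pi (fun i => Measure.pi (ρ i)) {ω | ∀ s, |R.gain U (fun i => toEuc (ω i)) s| ≤ κ}
      ≤ (K * ENNReal.ofReal (2 * √(2 * κ * n))) ^ m := by
  have hupdate (ω : Fin n → Fin d → ℝ) (l : Fin n) (x : Fin d → ℝ) :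
      (fun i => toEuc (Function.update ω l x i))
        = Function.update (fun i => toEuc (ω i)) l (toEuc x) :=
    Function.comp_update toEuc ω l x
  have hinter : {ω : Fin n → Fin d → ℝ | ∀ s, |R.gain U (fun i => toEuc (ω i)) s| ≤ κ}
      = ⋂ s, {ω | |R.gain U (fun i => toEuc (ω i)) s| ≤ κ} := by
    simp only [Set.ofPred_forall]
  rw [hinter]
  refine measure_pi_iInter_le_pow _ R.point (fun s => ?_) (fun s ω => ?_)
    fun s q hsq ω x => ?_
  · have hcont : Continuous fun ω : Fin n → Fin d → ℝ => R.gain U (fun i => toEuc (ω i)) s :=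
      (R.continuous_gain U s).comp
        (continuous_pi fun i => continuous_toEuc.comp (continuous_apply i))
    exact (isClosed_le hcont.abs continuous_const).measurableSet
  · simp only [Set.mem_ofPred_eq, hupdate, gain_update_point_self hR.point_injective]
    have hn : (0 : ℝ) < n := by exact_mod_cast (R.point s).pos
    simpa only [div_inv_eq_mul] using measure_pi_abs_moveGain_le (hρ (R.point s))
      (inv_pos.2 hn) (hR.inv_le s) _ _ hκ
  · simp only [Set.mem_ofPred_eq, hupdate, gain_update_point_of_lt hR.point_injective hsq]

end FirstMoves

section FirstChanges

variable {α β : Type*} {seq : ℕ → α → β} {L m : ℕ}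

/-- `e` lists distinct points whose label changes within the first `L` steps of `seq`, in the order
of their first changes: the label of `e s` changes after time `t s`, up to which only the labels of
earlier points of the list have changed. -/
structure IsFirstChangeEnum (seq : ℕ → α → β) (L : ℕ) (e : Fin m → α) (t : Fin m → ℕ) :
    Prop where
  injective : Function.Injective e
  time_lt (s : Fin m) : t s < L
  change (s : Fin m) : seq (t s + 1) (e s) ≠ seq (t s) (e s)
  eq_initial (s : Fin m) : ∀ x ∉ e '' Set.Iio s, seq (t s) x = seq 0 x

theorem IsFirstChangeEnum.eq_initial_self {e : Fin m → α} {t : Fin m → ℕ}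
    (h : IsFirstChangeEnum seq L e t) (s : Fin m) : seq (t s) (e s) = seq 0 (e s) :=
  h.eq_initial s _ fun ⟨_, hr, hrs⟩ => (ne_of_lt hr) (h.injective hrs)

theorem eq_initial_of_forall_lt_eq {x : α} {T : ℕ} (h : ∀ u < T, seq (u + 1) x = seq u x) :
    seq T x = seq 0 x := by
  induction T with
  | zero => rfl
  | succ T ih => exact (h T T.lt_add_one).trans (ih fun u hu => h u (hu.trans T.lt_add_one))

theorem exists_isFirstChangeEnum [Finite α]
    (hm : {x | ∃ t < L, seq (t + 1) x ≠ seq t x}.ncard = m) :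
    ∃ (e : Fin m → α) (t : Fin m → ℕ), IsFirstChangeEnum seq L e t := by
  classical
  set S := {x | ∃ t < L, seq (t + 1) x ≠ seq t x}
  let time (x : S) : ℕ := Nat.find x.2
  have htime_lt (x : S) : time x < L := (Nat.find_spec x.2).1
  have hconst (x : S) (u : ℕ) (hu : u < time x) : seq (u + 1) x = seq u x :=
    not_not.1 fun hne => Nat.find_min x.2 hu ⟨hu.trans (htime_lt x), hne⟩
  let enum : Fin m ≃ S := (Finite.equivFinOfCardEq hm).symm
  let sorted : Fin m ≃ S := (Tuple.sort (time ∘ enum)).trans enum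
  have hmono : Monotone (time ∘ sorted) := Tuple.monotone_sort (time ∘ enum)
  refine ⟨fun s => sorted s, time ∘ sorted, ?_, fun s => htime_lt _,
    fun s => (Nat.find_spec (sorted s).2).2, fun s x hx => ?_⟩
  · exact Subtype.val_injective.comp sorted.injective
  refine eq_initial_of_forall_lt_eq fun u hu => ?_
  by_cases hxS : x ∈ S
  · obtain ⟨r, hr⟩ := sorted.surjective ⟨x, hxS⟩
    have hsr : s ≤ r := not_lt.1 fun hrs => hx ⟨r, hrs, congrArg Subtype.val hr⟩
    exact hconst ⟨x, hxS⟩ u (hu.trans_le (hr ▸ hmono hsr))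
  · exact not_not.1 fun hne => hxS ⟨u, hu.trans (htime_lt _), hne⟩

theorem ncard_changes_of_subsingleton [Subsingleton β] (seq : ℕ → α → β) (L : ℕ) :
    {x | ∃ t < L, seq (t + 1) x ≠ seq t x}.ncard = 0 := by
  have hconst (t : ℕ) (x : α) : seq (t + 1) x = seq t x := Subsingleton.elim _ _
  simp [hconst]

end FirstChanges

section Runs

variable {n k d m L : ℕ} {X : Fin n → EuclideanSpace ℝ (Fin d)} {seq : ℕ → Fin n → Fin k}

/-- The first `L` steps of `seq` are iterations of the Hartigan–Wong method on `X`. -/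
def IsHartiganWongRun (X : Fin n → EuclideanSpace ℝ (Fin d)) (L : ℕ) (seq : ℕ → Fin n → Fin k) :
    Prop :=
  ∀ t < L, SingleMove (seq t) (seq (t + 1)) ∧ kmeansPot X (seq (t + 1)) < kmeansPot X (seq t)

theorem IsHartiganWongRun.antitoneOn_kmeansPot (h : IsHartiganWongRun X L seq) :
    AntitoneOn (fun t => kmeansPot X (seq t)) (Set.Iic L) :=
  antitoneOn_of_add_one_le Set.ordConnected_Iic fun t _ _ ht => (h t ht).2.le

theorem IsHartiganWongRun.kmeansPot_sub_le (h : IsHartiganWongRun X L seq) {t : ℕ} (ht : t < L) :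
    kmeansPot X (seq t) - kmeansPot X (seq (t + 1))
      ≤ kmeansPot X (seq 0) - kmeansPot X (seq L) :=
  sub_le_sub (h.antitoneOn_kmeansPot L.zero_le ht.le t.zero_le)
    (h.antitoneOn_kmeansPot ht (Set.mem_Iic.2 le_rfl) ht)

theorem SingleMove.eq_update {cl cl' : Fin n → Fin k} (h : SingleMove cl cl') {x : Fin n}
    (hx : cl' x ≠ cl x) : cl' = Function.update cl x (cl' x) := by
  obtain ⟨j, -, hother⟩ := h
  obtain rfl : x = j := not_not.1 fun hxj => hx (hother x hxj)
  exact Function.eq_update_iff.2 ⟨rfl, hother⟩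

namespace FirstMoves

/-- The record of the first moves of a sequence of labelings. -/
def ofSeq (seq : ℕ → Fin n → Fin k) (e : Fin m → Fin n) (t : Fin m → ℕ) : FirstMoves n k m where
  point := e
  source s := seq 0 (e s)
  target s := seq (t s + 1) (e s)
  label s r := seq (t s) (e r)
  initSize i := ⟨(clusterIdx (seq 0) i).card, Nat.lt_succ_of_le (card_finset_fin_le _)⟩

variable {e : Fin m → Fin n} {t : Fin m → ℕ}

theorem sumBefore_ofSeq {V : Type*} [AddCommGroup V] (h : IsFirstChangeEnum seq L e t)
    (U : Fin k → V) (f : Fin n → V) (s : Fin m) (i : Fin k) :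
    (ofSeq seq e t).sumBefore U f s i
      = ∑ j ∈ clusterIdx (seq (t s)) i, f j + (U i - ∑ j ∈ clusterIdx (seq 0) i, f j) := by
  have hrange : ∀ x ∉ Set.range fun r : Set.Iio s => e r, seq (t s) x = seq 0 x := by
    rw [← Set.image_eq_range]
    exact h.eq_initial s
  rw [sum_clusterIdx_eq_sum_add_sum_sub (h.injective.comp Subtype.val_injective) hrange f i,
    sumBefore]
  simp only [ofSeq, Function.comp_apply]
  abel

theorem size_ofSeq (h : IsFirstChangeEnum seq L e t) (s : Fin m) (i : Fin k) :
    (ofSeq seq e t).size s i = (clusterIdx (seq (t s)) i).card := by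
  rw [size, sumBefore_ofSeq h]
  simp [ofSeq]

theorem mem_clusterIdx_source_ofSeq (h : IsFirstChangeEnum seq L e t) (s : Fin m) :
    e s ∈ clusterIdx (seq (t s)) ((ofSeq seq e t).source s) :=
  mem_clusterIdx.2 (h.eq_initial_self s)

theorem notMem_clusterIdx_target_ofSeq (h : IsFirstChangeEnum seq L e t) (s : Fin m) :
    e s ∉ clusterIdx (seq (t s)) ((ofSeq seq e t).target s) :=
  fun hmem => h.change s (mem_clusterIdx.1 hmem).symm

theorem admissible_ofSeq (h : IsFirstChangeEnum seq L e t) : (ofSeq seq e t).Admissible where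
  point_injective := h.injective
  inv_le s := by
    rw [size_ofSeq h, size_ofSeq h]
    have hsource := Finset.card_pos.2 ⟨_, mem_clusterIdx_source_ofSeq h s⟩
    have htarget := Finset.card_lt_univ_of_notMem (notMem_clusterIdx_target_ofSeq h s)
    rw [Fintype.card_fin] at htarget
    refine le_add_of_nonneg_of_le (inv_nonneg.2 (sub_nonneg.2 (mod_cast hsource))) ?_
    exact inv_anti₀ (by positivity) (mod_cast htarget)

theorem gain_ofSeq_sum_clusterIdx (h : IsFirstChangeEnum seq L e t)
    (hrun : IsHartiganWongRun X L seq) (s : Fin m) :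
    (ofSeq seq e t).gain (fun i => ∑ j ∈ clusterIdx (seq 0) i, X j) X s
      = kmeansPot X (seq (t s)) - kmeansPot X (seq (t s + 1)) := by
  conv_rhs => rw [(hrun _ (h.time_lt s)).1.eq_update (h.change s),
    kmeansPot_sub_kmeansPot_update X (h.change s), h.eq_initial_self]
  simp only [gain, size_ofSeq h, sumBefore_ofSeq h, sub_self, add_zero]
  rfl

theorem abs_gain_ofSeq_sub_le (h : IsFirstChangeEnum seq L e t) {r η : ℝ}
    (hX : ∀ j, ‖X j‖ ≤ r) {U : Fin k → EuclideanSpace ℝ (Fin d)}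
    (hU : ∀ i, ‖U i - ∑ j ∈ clusterIdx (seq 0) i, X j‖ ≤ η) (s : Fin m) :
    |(ofSeq seq e t).gain U X s
        - (ofSeq seq e t).gain (fun i => ∑ j ∈ clusterIdx (seq 0) i, X j) X s|
      ≤ 4 * (η * (2 * r + η)) := by
  have hr : 0 ≤ r := (norm_nonneg _).trans (hX (e s))
  simp only [gain, size_ofSeq h, sumBefore_ofSeq h, sub_self, add_zero]
  apply abs_moveGain_sub_moveGain_le hr hX (mem_clusterIdx_source_ofSeq h s)
    (notMem_clusterIdx_target_ofSeq h s) <;>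
  · rw [add_sub_cancel_left]
    exact hU _

theorem exists_admissible_forall_abs_gain_le (hrun : IsHartiganWongRun X L seq)
    (hm : {x | ∃ t < L, seq (t + 1) x ≠ seq t x}.ncard = m) {r : ℝ} (hX : ∀ j, ‖X j‖ ≤ r) :
    ∃ R : FirstMoves n k m, R.Admissible ∧ ∀ (η : ℝ) (U : Fin k → EuclideanSpace ℝ (Fin d)),
      (∀ i, ‖U i - ∑ j ∈ clusterIdx (seq 0) i, X j‖ ≤ η) → ∀ s, |R.gain U X s|
        ≤ 4 * (η * (2 * r + η)) + (kmeansPot X (seq 0) - kmeansPot X (seq L)) := by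
  obtain ⟨e, t, h⟩ := exists_isFirstChangeEnum hm
  refine ⟨ofSeq seq e t, admissible_ofSeq h, fun η U hU s => ?_⟩
  have hrounding := abs_gain_ofSeq_sub_le h hX hU s
  rw [gain_ofSeq_sum_clusterIdx h hrun, abs_le] at hrounding
  have hpos := (hrun _ (h.time_lt s)).2
  have hdrop := hrun.kmeansPot_sub_le (h.time_lt s)
  rw [abs_le]
  constructor <;> linarith [hrounding.1, hrounding.2]

end FirstMoves

end Runs

section Rounding

theorem exists_fin_abs_neg_add_mul_sub_le {A ε x : ℝ} (hε : 0 < ε) (hx : |x| ≤ A) :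
    ∃ g : Fin (⌊2 * A / ε⌋₊ + 1), |-A + g * ε - x| ≤ ε := by
  have hx := abs_le.1 hx
  have hnonneg : 0 ≤ (x + A) / ε := div_nonneg (by linarith) hε.le
  have hle : (x + A) / ε ≤ 2 * A / ε := by
    gcongr
    linarith
  refine ⟨⟨⌊(x + A) / ε⌋₊, Nat.lt_succ_of_le (Nat.floor_le_floor hle)⟩, ?_⟩
  have hlower : ⌊(x + A) / ε⌋₊ * ε ≤ x + A := (le_div_iff₀ hε).1 (Nat.floor_le hnonneg)
  have hupper : x + A < (⌊(x + A) / ε⌋₊ + 1) * ε := (div_lt_iff₀ hε).1 (Nat.lt_floor_add_one _)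
  rw [abs_le]
  constructor <;> linarith

variable {d : ℕ}

theorem norm_le_sqrt_mul_of_forall_abs_le {v : EuclideanSpace ℝ (Fin d)} {r : ℝ} (hr : 0 ≤ r)
    (hv : ∀ c, |v c| ≤ r) : ‖v‖ ≤ √d * r := by
  rw [EuclideanSpace.norm_eq, ← Real.sqrt_sq hr, ← Real.sqrt_mul d.cast_nonneg]
  refine Real.sqrt_le_sqrt ((Finset.sum_le_card_nsmul _ _ (r ^ 2) fun c _ => ?_).trans_eq (by simp))
  exact pow_le_pow_left₀ (norm_nonneg _) (hv c) 2

/-- The points of the grid of mesh `ε` in `[-A, A]^d`, to which the sums of the initial clusters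
are rounded. -/
noncomputable def gridPoint (A ε : ℝ) {N : ℕ} (g : Fin d → Fin N) : EuclideanSpace ℝ (Fin d) :=
  toEuc fun c => -A + g c * ε

theorem exists_norm_gridPoint_sub_le {A ε : ℝ} (hε : 0 < ε) {v : EuclideanSpace ℝ (Fin d)}
    (hv : ∀ c, |v c| ≤ A) :
    ∃ g : Fin d → Fin (⌊2 * A / ε⌋₊ + 1), ‖gridPoint A ε g - v‖ ≤ √d * ε := by
  choose g hg using fun c => exists_fin_abs_neg_add_mul_sub_le hε (hv c)
  exact ⟨g, norm_le_sqrt_mul_of_forall_abs_le hε.le hg⟩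

theorem abs_sum_toEuc_apply_le {n : ℕ} {ω : Fin n → Fin d → ℝ} {r : ℝ} (hω : ∀ i j, |ω i j| ≤ r)
    (hr : 0 ≤ r) (C : Finset (Fin n)) (c : Fin d) : |(∑ j ∈ C, toEuc (ω j)) c| ≤ n * r := by
  rw [WithLp.ofLp_sum, Finset.sum_apply]
  calc |∑ j ∈ C, ω j c| ≤ ∑ j ∈ C, |ω j c| := Finset.abs_sum_le_sum_abs _ _
    _ ≤ C.card * r := by
        rw [← nsmul_eq_mul]
        exact Finset.sum_le_card_nsmul _ _ _ fun j _ => hω j c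
    _ ≤ n * r := by
        gcongr
        exact card_finset_fin_le C

end Rounding

section UnionBound

variable {n k d m : ℕ}

theorem exists_admissible_gridPoint_abs_gain_le (hd : 0 < d) {D ε : ℝ} (hD : 5 ≤ D) (hε : 0 < ε)
    (hε1 : ε ≤ 1) {ω : Fin n → Fin d → ℝ} (hω : ∀ i j, ω i j ∈ Set.Icc (-(D / 2)) (D / 2))
    {L : ℕ} {seq : ℕ → Fin n → Fin k} (hrun : IsHartiganWongRun (fun i => toEuc (ω i)) L seq)
    (hm : {x | ∃ t < L, seq (t + 1) x ≠ seq t x}.ncard = m)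
    (hdrop : kmeansPot (fun i => toEuc (ω i)) (seq 0)
      - kmeansPot (fun i => toEuc (ω i)) (seq L) ≤ ε) :
    ∃ (R : FirstMoves n k m) (g : Fin k → Fin d → Fin (⌊n * D / ε⌋₊ + 1)), R.Admissible ∧
      ∀ s, |R.gain (fun i => gridPoint (n * (D / 2)) ε (g i)) (fun i => toEuc (ω i)) s|
        ≤ 5 * d * D * ε := by
  have hω' (i : Fin n) (j : Fin d) : |ω i j| ≤ D / 2 := abs_le.2 (hω i j)
  have hnorm (i : Fin n) : ‖toEuc (ω i)‖ ≤ √d * (D / 2) :=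
    norm_le_sqrt_mul_of_forall_abs_le (by linarith) (hω' i)
  obtain ⟨R, hR, hgain⟩ := FirstMoves.exists_admissible_forall_abs_gain_le hrun hm hnorm
  have hgrid (i : Fin k) := exists_norm_gridPoint_sub_le hε
    (abs_sum_toEuc_apply_le hω' (by linarith) (clusterIdx (seq 0) i))
  rw [show 2 * (n * (D / 2)) = n * D by ring] at hgrid
  choose g hg using hgrid
  refine ⟨R, g, hR, fun s => (hgain _ _ hg s).trans ?_⟩
  have hdR : (1 : ℝ) ≤ d := by exact_mod_cast hd
  have hsqrt : √(d : ℝ) * √d = d := Real.mul_self_sqrt d.cast_nonneg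
  calc 4 * (√d * ε * (2 * (√d * (D / 2)) + √d * ε)) + _
      ≤ 4 * (√d * √d) * ε * (D + ε) + ε := by linarith
    _ = (4 * d * D + 4 * d * ε + 1) * ε := by rw [hsqrt]; ring
    _ ≤ 5 * d * D * ε := by
        gcongr
        nlinarith

theorem measure_pi_exists_run_le {ρ : Fin n → Fin d → Measure ℝ}
    [∀ i j, IsProbabilityMeasure (ρ i j)] {K : ENNReal} (hρ : ∀ i j, ρ i j ≤ K • volume)
    (hd : 0 < d) {D ε : ℝ} (hD : 5 ≤ D) (hε : 0 < ε) (hε1 : ε ≤ 1) :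
    Measure.pi (fun i => Measure.pi (ρ i))
        ({ω | ∀ i j, ω i j ∈ Set.Icc (-(D / 2)) (D / 2)} ∩
          {ω | ∃ (L : ℕ) (seq : ℕ → Fin n → Fin k),
            IsHartiganWongRun (fun i => toEuc (ω i)) L seq ∧
            {x | ∃ t < L, seq (t + 1) x ≠ seq t x}.ncard = m ∧
            kmeansPot (fun i => toEuc (ω i)) (seq 0)
              - kmeansPot (fun i => toEuc (ω i)) (seq L) ≤ ε})
      ≤ Fintype.card (FirstMoves n k m × (Fin k → Fin d → Fin (⌊n * D / ε⌋₊ + 1)))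
        * (K * ENNReal.ofReal (2 * √(2 * (5 * d * D * ε) * n))) ^ m := by
  refine measure_le_card_mul_of_forall_exists _ (P := fun R => R.1.Admissible)
    (B := fun R => {ω | ∀ s, |R.1.gain (fun i => gridPoint (n * (D / 2)) ε (R.2 i))
      (fun i => toEuc (ω i)) s| ≤ 5 * d * D * ε}) ?_ fun R hR => ?_
  · rintro ω ⟨hω, L, seq, hrun, hm, hdrop⟩
    obtain ⟨R, g, hR⟩ :=
      exists_admissible_gridPoint_abs_gain_le hd hD hε hε1 hω hrun hm hdrop
    exact ⟨(R, g), hR⟩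
  · exact FirstMoves.measure_pi_abs_gain_le (fun i => hρ i ⟨0, hd⟩) hR _ (by positivity)

end UnionBound

section Numerics

variable {n k d : ℕ}

theorem six_le_cubeD_and_le_cubeD_sq (hk : 2 ≤ k) (hd : 0 < d) (hn : 4 * k * d ≤ n) :
    6 ≤ cubeD n k d ∧ (n : ℝ) ≤ cubeD n k d ^ 2 := by
  have hn8 : 8 ≤ n := by nlinarith
  have hn8R : (8 : ℝ) ≤ n := by exact_mod_cast hn8
  have hnkd : (16 : ℝ) ≤ (n : ℝ) * k * d := by
    exact_mod_cast (show 16 ≤ n * k * d by nlinarith [Nat.mul_le_mul hn8 hk])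
  have hlog : (9 / 4 : ℝ) ≤ Real.log ((n : ℝ) * k * d) := by
    have hlog16 : Real.log 16 = 4 * Real.log 2 := by
      rw [show (16 : ℝ) = 2 ^ 4 by norm_num, Real.log_pow]
      norm_num
    linarith [Real.log_two_gt_d9, Real.log_le_log (by norm_num) hnkd]
  constructor
  · exact Real.le_sqrt_of_sq_le (by nlinarith)
  · rw [cubeD, Real.sq_sqrt (by positivity)]
    nlinarith

theorem sum_range_four_mul_id_add (K : ℕ) :
    ∑ s ∈ Finset.range (4 * K), s + 8 * K = (8 * K + 6) * K := by
  have hgauss := Finset.sum_range_id_mul_two (4 * K)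
  cases K with
  | zero => simp
  | succ K =>
    rw [show 4 * (K + 1) - 1 = 4 * K + 3 by omega] at hgauss
    linarith

theorem FirstMoves.card_four_mul (n k K : ℕ) :
    Fintype.card (FirstMoves n k (4 * K)) = (n ^ 4 * k ^ (8 * K + 6)) ^ K * (n + 1) ^ k := by
  rw [FirstMoves.card_eq, mul_pow, ← pow_mul, ← pow_mul, ← sum_range_four_mul_id_add]
  ring

theorem add_one_pow_le_two_mul_rpow_pow (hn : 0 < n) (k : ℕ) (hd : 0 < d) :
    ((n : ℝ) + 1) ^ k ≤ (2 * (n : ℝ) ^ (1 / (d : ℝ))) ^ (k * d) := by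
  have hnR : (1 : ℝ) ≤ n := by exact_mod_cast hn
  have htwo : (2 : ℝ) ≤ 2 ^ d := le_self_pow₀ one_le_two hd.ne'
  rw [mul_comm k d, pow_mul, mul_pow, one_div, Real.rpow_inv_natCast_pow n.cast_nonneg hd.ne']
  gcongr
  nlinarith

theorem natFloor_add_one_le_two_mul {x : ℝ} (hx : 1 ≤ x) : (⌊x⌋₊ : ℝ) + 1 ≤ 2 * x := by
  linarith [Nat.floor_le (zero_le_one.trans hx)]

theorem one_div_mul_two_mul_sqrt_pow_four {x : ℝ} (hx : 0 ≤ x) (σ : ℝ) :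
    (1 / σ * (2 * √x)) ^ 4 = 16 * x ^ 2 / σ ^ 4 := by
  have hsqrt : √x ^ 4 = x ^ 2 := by rw [show 4 = 2 * 2 from rfl, pow_mul, Real.sq_sqrt hx]
  rw [mul_pow, mul_pow, hsqrt]
  ring

theorem count_mul_density_base_le (hkn : k ≤ n) (hd : 0 < d) {D ε σ ν : ℝ} (hD : 0 < D)
    (hDn : (n : ℝ) ≤ D ^ 2) (hε : 0 < ε) (hν : 0 ≤ ν) (a : ℕ) :
    (n : ℝ) ^ 4 * (k : ℝ) ^ (a + 6) * (2 * ν) * (2 * (n * D / ε))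
        * (16 * (2 * (5 * d * D * ε) * n) ^ 2 / σ ^ 4)
      ≤ 6400 * (k : ℝ) ^ (a + 4) * (d : ℝ) ^ 11 * D ^ 5 * ((n : ℝ) ^ 8 * ν) * ε / σ ^ 4 := by
  have hkD : (k : ℝ) ^ 2 ≤ n * D ^ 2 := by
    have : (k : ℝ) ≤ n := by exact_mod_cast hkn
    nlinarith [n.cast_nonneg (α := ℝ)]
  have hd11 : (d : ℝ) ^ 2 ≤ d ^ 11 := pow_le_pow_right₀ (by exact_mod_cast hd) (by norm_num)
  calc _ = (6400 * (k : ℝ) ^ (a + 4) * D ^ 3 * n ^ 7 * ν * ε / σ ^ 4) * (k ^ 2 * d ^ 2) := by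
        field_simp
        ring
    _ ≤ (6400 * (k : ℝ) ^ (a + 4) * D ^ 3 * n ^ 7 * ν * ε / σ ^ 4)
          * (n * D ^ 2 * d ^ 11) := by
        have : 0 ≤ σ ^ 4 := by positivity
        gcongr
    _ = _ := by ring

theorem card_mul_pow_le (hk : 0 < k) (hd : 0 < d) (hn : 4 * k * d ≤ n) {D ε : ℝ} (hD : 1 ≤ D)
    (hDn : (n : ℝ) ≤ D ^ 2) (hε : 0 < ε) (hε1 : ε ≤ 1) (σ : ℝ) :
    (Fintype.card (FirstMoves n k (4 * k * d) × (Fin k → Fin d → Fin (⌊n * D / ε⌋₊ + 1))) : ℝ)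
        * (1 / σ * (2 * √(2 * (5 * d * D * ε) * n))) ^ (4 * k * d)
      ≤ (6400 * (k : ℝ) ^ (8 * k * d + 4) * (d : ℝ) ^ 11 * D ^ 5
          * (n : ℝ) ^ ((8 : ℝ) + 1 / (d : ℝ)) * ε / σ ^ 4) ^ (k * d) := by
  have hkn : k ≤ n := by nlinarith
  have hnpos : 0 < n := hk.trans_le hkn
  have hnR : (1 : ℝ) ≤ n := by exact_mod_cast hnpos
  have hgrid : 1 ≤ n * D / ε :=
    (one_le_div hε).2 (hε1.trans (one_le_mul_of_one_le_of_one_le hnR hD))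
  have hsplit : (n : ℝ) ^ ((8 : ℝ) + 1 / (d : ℝ)) = (n : ℝ) ^ 8 * (n : ℝ) ^ (1 / (d : ℝ)) := by
    rw [Real.rpow_add (by positivity)]
    norm_cast
  rw [mul_assoc 4, mul_assoc 8, Fintype.card_prod, FirstMoves.card_four_mul, pow_mul _ 4 (k * d),
    one_div_mul_two_mul_sqrt_pow_four (by positivity), hsplit]
  simp only [Fintype.card_pi, Fintype.card_fin, Finset.prod_const, Finset.card_univ]
  rw [← pow_mul, mul_comm d k]
  push_cast
  calc _ ≤ ((n : ℝ) ^ 4 * (k : ℝ) ^ (8 * (k * d) + 6)) ^ (k * d)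
          * (2 * (n : ℝ) ^ (1 / (d : ℝ))) ^ (k * d) * (2 * (n * D / ε)) ^ (k * d)
          * (16 * (2 * (5 * d * D * ε) * n) ^ 2 / σ ^ 4) ^ (k * d) := by
        gcongr
        · exact add_one_pow_le_two_mul_rpow_pow hnpos k hd
        · exact natFloor_add_one_le_two_mul hgrid
    _ ≤ _ := by
        simp only [← mul_pow]
        gcongr
        exact count_mul_density_base_le hkn hd (by positivity) hDn hε (by positivity) _

end Numerics

/-- Let the random point set `X` consist of `n` independent Gaussian
perturbations (mean `0`, standard deviation `σ ≤ 1`) of fixed points of `[0,1]^d`,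
conditioned on `X ⊆ [−D/2, D/2]^d` with `D = √(2n·ln(nkd))`, and assume `4kd ≤ n`. Then the
probability that some sequence of Hartigan--Wong iterations (into `k` clusters) in which
exactly `4kd` distinct points switch clusters improves the potential by at most `ε ≤ 1` — i.e.
that `Δ_min ≤ ε` — is bounded by `(c·k^{8kd+4}·d^{11}·D^5·n^{8+1/d}·ε/σ⁴)^{kd}` for an
absolute constant `c > 0`. -/
theorem improving_sequence_min_gain :
    ∃ c : ℝ, 0 < c ∧
      ∀ (n k d : ℕ), 0 < n → 0 < k → 0 < d → 4 * k * d ≤ n →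
        ∀ (Y : Fin n → Fin d → ℝ), (∀ i j, Y i j ∈ Set.Icc (0 : ℝ) 1) →
          ∀ σ : ℝ, 0 < σ → σ ≤ 1 →
            ∀ ε : ℝ, 0 < ε → ε ≤ 1 →
              ProbabilityTheory.cond (perturbedPoints n d Y σ)
                  {ω | ∀ (i : Fin n) (j : Fin d),
                      ω i j ∈ Set.Icc (-(cubeD n k d / 2)) (cubeD n k d / 2)}
                  {ω | ∃ (L : ℕ) (seq : ℕ → Fin n → Fin k),
                    (∀ t < L, SingleMove (seq t) (seq (t + 1)) ∧
                      kmeansPot (fun i => toEuc (ω i)) (seq (t + 1))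
                        < kmeansPot (fun i => toEuc (ω i)) (seq t)) ∧
                    {x : Fin n | ∃ t < L, seq (t + 1) x ≠ seq t x}.ncard = 4 * k * d ∧
                    kmeansPot (fun i => toEuc (ω i)) (seq 0)
                        - kmeansPot (fun i => toEuc (ω i)) (seq L) ≤ ε}
                ≤ ENNReal.ofReal
                    ((c * (k : ℝ) ^ (8 * k * d + 4) * (d : ℝ) ^ 11 * cubeD n k d ^ 5
                        * (n : ℝ) ^ ((8 : ℝ) + 1 / (d : ℝ)) * ε / σ ^ 4) ^ (k * d)) := by
  refine ⟨6400, by norm_num, fun n k d _ hk hd hnkd Y hY σ hσ hσ1 ε hε hε1 => ?_⟩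
  obtain rfl | hk2 : k = 1 ∨ 2 ≤ k := by omega
  · refine le_of_eq_of_le
      (measure_mono_null (fun ω ⟨L, seq, _, hm, _⟩ => ?_) measure_empty) zero_le
    rw [ncard_changes_of_subsingleton] at hm
    omega
  obtain ⟨hD, hDn⟩ := six_le_cubeD_and_le_cubeD_sq hk2 hd hnkd
  have hcube : MeasurableSet {ω : Fin n → Fin d → ℝ |
      ∀ i j, ω i j ∈ Set.Icc (-(cubeD n k d / 2)) (cubeD n k d / 2)} := by
    measurability
  have hprob (i : Fin n) (j : Fin d) := cond_isProbabilityMeasure <|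
    gaussianReal_Icc_ne_zero (hY i j) hσ hσ1 hD
  rw [← cond_inter_self hcube, cond_perturbedPoints_cube hY hσ hσ1 hD]
  refine (measure_pi_exists_run_le
    (fun i j => cond_gaussianReal_Icc_le_smul_volume (hY i j) hσ hσ1 hD) hd (by linarith) hε
    hε1).trans ?_
  rw [← ENNReal.ofReal_mul (by positivity), ← ENNReal.ofReal_pow (by positivity),
    ← ENNReal.ofReal_natCast, ← ENNReal.ofReal_mul (by positivity)]
  exact ENNReal.ofReal_le_ofReal (card_mul_pow_le hk hd hnkd (by linarith) hDn hε hε1 σ)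
end
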